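/- arXiv:1702.05503 — 4 statements merged into one kernel-verified Lean document; each statement's English description precedes it below -/
import Mathlib

section
/- There exists a constant c > 0, depending only on n, d, and C₀, with the following property: for every Λ ≥ 1, every r > 0, and all points x₁, x₂ ∈ Ω with dist(x₁,Γ) ≥ r, dist(x₂,Γ) ≥ r and |x₁ − x₂| ≤ Λ r, there exist points y₁ ∈ B(x₁, r/3) and y₂ ∈ B(x₂, r/3) such that dist([y₁,y₂], Γ) ≥ c Λ^{−d/(n−d−1)} r, where [y₁,y₂] denotes the closed line segment joining y₁ to y₂. (Existence of thick Harnack tubes.) -/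
open MeasureTheory Metric Set Filter
open scoped ENNReal NNReal Topology

noncomputable section

/-- Euclidean space `ℝⁿ`. -/
abbrev Euc (n : ℕ) := EuclideanSpace ℝ (Fin n)

/-- `Γ ⊆ ℝⁿ` is `d`-Ahlfors regular with constant `C₀`. -/
def AhlforsRegular (n : ℕ) (d C₀ : ℝ) (Γ : Set (Euc n)) : Prop :=
  ∀ x ∈ Γ, ∀ r : ℝ, 0 < r →
    ENNReal.ofReal (C₀⁻¹ * r ^ d) ≤ μH[d] (Γ ∩ ball x r) ∧
      μH[d] (Γ ∩ ball x r) ≤ ENNReal.ofReal (C₀ * r ^ d)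

/-- The weight `w(x) = dist(x, Γ) ^ (d + 1 - n)`. -/
def weightW (n : ℕ) (d : ℝ) (Γ : Set (Euc n)) (x : Euc n) : ℝ :=
  infDist x Γ ^ (d + 1 - (n : ℝ))

/-- The measure `m` with density `w` with respect to Lebesgue measure. -/
def measW (n : ℕ) (d : ℝ) (Γ : Set (Euc n)) : Measure (Euc n) :=
  volume.withDensity fun x => ENNReal.ofReal (weightW n d Γ x)

/-- `v` is a distributional gradient of `u` on the open set `E`: for every smooth
compactly supported test function `φ` with support in `E`, `∫_E u ∇φ = -∫_E φ v`. -/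
def IsDistribGradOn {n : ℕ} (u : Euc n → ℝ) (v : Euc n → Euc n) (E : Set (Euc n)) : Prop :=
  ∀ φ : Euc n → ℝ, ContDiff ℝ (⊤ : ℕ∞) φ → HasCompactSupport φ → tsupport φ ⊆ E →
    ∫ x in E, u x • gradient φ x = -∫ x in E, φ x • v x

/-- The averages of `u` over small balls centered at `x` converge to `t`. -/
def HasTraceAt {n : ℕ} (u : Euc n → ℝ) (x : Euc n) (t : ℝ) : Prop :=
  Tendsto (fun ρ : ℝ => ⨍ y in ball x ρ, u y) (𝓝[>] (0 : ℝ)) (𝓝 t)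

/-- `u` belongs to the weighted Sobolev space `W = Ẇ^{1,2}_w(Ω)`, `Ω = Γᶜ`, with
distributional gradient `v` on `Ω` lying in `L²(Ω, m)`. -/
structure MemW (n : ℕ) (d : ℝ) (Γ : Set (Euc n)) (u : Euc n → ℝ) (v : Euc n → Euc n) :
    Prop where
  locInt : LocallyIntegrableOn u Γᶜ volume
  gradLocInt : LocallyIntegrableOn v Γᶜ volume
  isGrad : IsDistribGradOn u v Γᶜ
  l2 : ∫⁻ x in Γᶜ, ENNReal.ofReal (‖v x‖ ^ 2) ∂(measW n d Γ) < ⊤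

/-- `u` belongs to the local space `W_r(E)`: `u ∈ L¹_loc(E)` and `φ u` (extended by `0`)
belongs to `W` for every smooth compactly supported `φ` with support in `E`. -/
def MemWrOn (n : ℕ) (d : ℝ) (Γ : Set (Euc n)) (E : Set (Euc n)) (u : Euc n → ℝ) : Prop :=
  LocallyIntegrableOn u E volume ∧
    ∀ φ : Euc n → ℝ, ContDiff ℝ (⊤ : ℕ∞) φ → HasCompactSupport φ → tsupport φ ⊆ E →
      ∃ vφ : Euc n → Euc n, MemW n d Γ (fun x => φ x * u x) vφ

/-- Degenerate ellipticity and boundedness conditions for the matrix `A`. -/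
def EllipticOn (n : ℕ) (d : ℝ) (Γ : Set (Euc n)) (A : Euc n → Euc n →L[ℝ] Euc n)
    (C₁ : ℝ) : Prop :=
  ∀ x, x ∉ Γ →
    (∀ ξ ζ : Euc n, |∑ i, A x ξ i * ζ i| ≤ C₁ * weightW n d Γ x * ‖ξ‖ * ‖ζ‖) ∧
      ∀ ξ : Euc n, C₁⁻¹ * weightW n d Γ x * ‖ξ‖ ^ 2 ≤ ∑ i, A x ξ i * ξ i

/-- `u`, with gradient `v`, is a weak subsolution of `- div A ∇u = 0` on `U ⊆ Ω = Γᶜ`. -/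
def SubsolOn {n : ℕ} (Γ : Set (Euc n)) (A : Euc n → Euc n →L[ℝ] Euc n)
    (v : Euc n → Euc n) (U : Set (Euc n)) : Prop :=
  ∀ φ : Euc n → ℝ, ContDiff ℝ (⊤ : ℕ∞) φ → HasCompactSupport φ → tsupport φ ⊆ U →
    (∀ x, 0 ≤ φ x) → ∫ x in Γᶜ, ∑ i, A x (v x) i * gradient φ x i ≤ 0

/-- `u`, with gradient `v`, is a weak supersolution of `- div A ∇u = 0` on `U ⊆ Ω = Γᶜ`. -/
def SupersolOn {n : ℕ} (Γ : Set (Euc n)) (A : Euc n → Euc n →L[ℝ] Euc n)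
    (v : Euc n → Euc n) (U : Set (Euc n)) : Prop :=
  ∀ φ : Euc n → ℝ, ContDiff ℝ (⊤ : ℕ∞) φ → HasCompactSupport φ → tsupport φ ⊆ U →
    (∀ x, 0 ≤ φ x) → 0 ≤ ∫ x in Γᶜ, ∑ i, A x (v x) i * gradient φ x i

/-- `u`, with gradient `v`, is a weak solution of `- div A ∇u = 0` on `U ⊆ Ω = Γᶜ`. -/
def SolOn {n : ℕ} (Γ : Set (Euc n)) (A : Euc n → Euc n →L[ℝ] Euc n)
    (v : Euc n → Euc n) (U : Set (Euc n)) : Prop :=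
  ∀ φ : Euc n → ℝ, ContDiff ℝ (⊤ : ℕ∞) φ → HasCompactSupport φ → tsupport φ ⊆ U →
    ∫ x in Γᶜ, ∑ i, A x (v x) i * gradient φ x i = 0

/-!
Let `P` be a hyperplane orthogonal to `x₂ - x₁`. Suppose that each segment `[v + x₁, v + x₂]` with
`v ∈ P`, `‖v‖ < r / 3`, comes within `δ` of `Γ`. Then the projection to `P` of the part of `Γ` near
`[x₁, x₂]` is `δ`-dense in a ball of radius `r / 3`. Every ball of radius `δ` centered on `Γ` has
mass `≳ δ ^ d`, so integrating over the ball in `P` (Fubini) shows that the mass near `[x₁, x₂]` is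
`≳ δ ^ d * (r / δ) ^ (n - 1)`. But this mass is `≲ (Λ * r) ^ d`, which is impossible for
`δ = c * Λ ^ (-d / (n - d - 1)) * r` with `c` small.
-/

theorem mul_addHaar_le_measure_univ_mul_addHaar_ball {F : Type*} [NormedAddCommGroup F]
    [SecondCountableTopology F] [MeasurableSpace F] [BorelSpace F] (ν : Measure F)
    [ν.IsAddHaarMeasure] [SFinite ν] (η : Measure F) [SFinite η] {s : Set F} {a : ℝ≥0∞} {ε : ℝ}
    (ha : ∀ p ∈ s, a ≤ η (ball p ε)) :
    a * ν s ≤ η univ * ν (ball 0 ε) := by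
  have hU : MeasurableSet {q : F × F | dist q.2 q.1 < ε} :=
    (isOpen_lt (by fun_prop) continuous_const).measurableSet
  have hη : Measurable fun p => η (ball p ε) := measurable_measure_prodMk_left hU
  calc a * ν s ≤ a * ν {p | a ≤ η (ball p ε)} := by gcongr; exact ha
    _ ≤ ∫⁻ p, η (ball p ε) ∂ν := mul_meas_ge_le_lintegral hη a
    _ = ν.prod η {q : F × F | dist q.2 q.1 < ε} := (Measure.prod_apply hU).symm
    _ = ∫⁻ y, ν (ball y ε) ∂η := by
      rw [Measure.prod_apply_symm hU]
      simp only [preimage_ofPred_eq, dist_comm, ball]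
    _ = η univ * ν (ball 0 ε) := by
      simp only [Measure.addHaar_ball_center ν, lintegral_const, mul_comm]

theorem mul_pow_finrank_le_measure_univ_mul_pow_finrank {F : Type*} [NormedAddCommGroup F]
    [NormedSpace ℝ F] [FiniteDimensional ℝ F] [MeasurableSpace F] [BorelSpace F] (η : Measure F)
    [SFinite η] {x : F} {a : ℝ≥0∞} {ρ ε : ℝ} (hρ : 0 < ρ) (hε : 0 < ε)
    (ha : ∀ p ∈ ball x ρ, a ≤ η (ball p ε)) :
    a * ENNReal.ofReal (ρ ^ Module.finrank ℝ F) ≤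
      η univ * ENNReal.ofReal (ε ^ Module.finrank ℝ F) := by
  let ν : Measure F := Measure.addHaar
  have h := mul_addHaar_le_measure_univ_mul_addHaar_ball ν η ha
  rw [Measure.addHaar_ball_of_pos ν x hρ, Measure.addHaar_ball_of_pos ν 0 hε,
    ← mul_assoc, ← mul_assoc] at h
  exact (ENNReal.mul_le_mul_iff_left (measure_ball_pos ν 0 one_pos).ne'
    measure_ball_lt_top.ne).mp h

theorem dist_le_of_mem_thickening_segment {E : Type*} [SeminormedAddCommGroup E] [NormedSpace ℝ E]
    {x y z w : E} {ε : ℝ} (hε : 0 ≤ ε) (hz : z ∈ thickening ε (segment ℝ x y))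
    (hw : w ∈ thickening ε (segment ℝ x y)) :
    dist z w ≤ dist x y + 2 * ε := by
  rw [← convexHull_pair] at hz hw
  have hbdd : Bornology.IsBounded (convexHull ℝ {x, y}) :=
    isBounded_convexHull.mpr (toFinite _).isBounded
  calc dist z w ≤ diam (thickening ε (convexHull ℝ {x, y})) :=
        dist_le_diam_of_mem hbdd.thickening hz hw
    _ ≤ diam (convexHull ℝ {x, y}) + 2 * ε := diam_thickening_le _ hε
    _ = dist x y + 2 * ε := by rw [convexHull_diam, diam_pair]

section InnerProductSpace

variable {E : Type*} [NormedAddCommGroup E] [InnerProductSpace ℝ E]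

theorem exists_finrank_add_one_eq_and_mem_orthogonal [FiniteDimensional ℝ E] [Nontrivial E]
    (w : E) :
    ∃ P : Submodule ℝ E, Module.finrank ℝ P + 1 = Module.finrank ℝ E ∧ w ∈ Pᗮ := by
  obtain ⟨e, he, hw⟩ : ∃ e : E, e ≠ 0 ∧ w ∈ ℝ ∙ e := by
    obtain rfl | hw := eq_or_ne w 0
    · exact (exists_ne (0 : E)).imp fun e he => ⟨he, zero_mem _⟩
    · exact ⟨w, hw, Submodule.mem_span_singleton_self w⟩
  refine ⟨(ℝ ∙ e)ᗮ, ?_, by rwa [Submodule.orthogonal_orthogonal]⟩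
  rw [← (ℝ ∙ e).finrank_add_finrank_orthogonal, finrank_span_singleton he, add_comm]

variable (P : Submodule ℝ E) [P.HasOrthogonalProjection]

theorem orthogonalProjectionOnto_eq_of_mem_segment {x y z : E} (hxy : y - x ∈ Pᗮ)
    (hz : z ∈ segment ℝ x y) :
    P.orthogonalProjectionOnto z = P.orthogonalProjectionOnto x := by
  rw [segment_eq_image'] at hz
  obtain ⟨t, -, rfl⟩ := hz
  rw [map_add, map_smul, P.orthogonalProjectionOnto_eq_zero_iff.mpr hxy, smul_zero, add_zero]

theorem dist_orthogonalProjectionOnto_le (x y : E) :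
    dist (P.orthogonalProjectionOnto x) (P.orthogonalProjectionOnto y) ≤ dist x y := by
  simpa using P.lipschitzWith_orthogonalProjectionOnto.dist_le_mul x y

theorem exists_mem_thickening_segment_dist_orthogonalProjectionOnto_lt {Γ : Set E}
    {x₁ x₂ : E} {δ ρ : ℝ} (hP : x₂ - x₁ ∈ Pᗮ) {v : P} (hv : ‖v‖ < ρ)
    (hΓ : ∃ z ∈ segment ℝ (v + x₁) (v + x₂), z ∈ thickening δ Γ) :
    ∃ γ ∈ Γ, γ ∈ thickening (ρ + δ) (segment ℝ x₁ x₂) ∧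
      dist (P.orthogonalProjectionOnto γ) (P.orthogonalProjectionOnto x₁ + v) < δ := by
  obtain ⟨z, hz, hzΓ⟩ := hΓ
  obtain ⟨γ, hγ, hzγ⟩ := mem_thickening_iff.mp hzΓ
  rw [dist_comm] at hzγ
  refine ⟨γ, hγ, ?_, ?_⟩
  · rw [← segment_translate_image] at hz
    obtain ⟨y, hy, rfl⟩ := hz
    have hvy : dist ((v : E) + y) y = ‖v‖ := by simp
    exact mem_thickening_iff.mpr ⟨y, hy, by linarith [dist_triangle γ (v + y) y]⟩
  · have hπz : P.orthogonalProjectionOnto z = P.orthogonalProjectionOnto x₁ + v := by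
      rw [orthogonalProjectionOnto_eq_of_mem_segment P (by rwa [add_sub_add_left_eq_sub]) hz,
        map_add, P.orthogonalProjectionOnto_mem_subspace_eq_self, add_comm]
    exact hπz ▸ (dist_orthogonalProjectionOnto_le P γ z).trans_lt hzγ

end InnerProductSpace

theorem exists_pos_le_mul_rpow_lt_one (K : ℝ) {ε s : ℝ} (hε : 0 < ε) (hs : 0 < s) :
    ∃ c : ℝ, 0 < c ∧ c ≤ ε ∧ K * c ^ s < 1 := by
  have hlim : Tendsto (fun c : ℝ => K * c ^ s) (𝓝 0) (𝓝 0) := by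
    simpa [Real.zero_rpow hs.ne'] using
      (Real.continuousAt_rpow_const 0 s (.inr hs.le)).tendsto.const_mul K
  have hev : ∀ᶠ c in 𝓝[>] (0 : ℝ), K * c ^ s < 1 :=
    nhdsWithin_le_nhds (hlim.eventually_lt_const one_pos)
  obtain ⟨c, hcK, hc0, hcε⟩ := (hev.and (Ioc_mem_nhdsGT hε)).exists
  exact ⟨c, hc0, hcε, hcK⟩

theorem mul_rpow_mul_pow_lt_of_scaled_radius {m : ℕ} {d C c Λ r δ : ℝ} (hdm : d < m) (hC : 0 < C)
    (hc : 0 < c) (hΛ : 0 < Λ) (hr : 0 < r) (hδ : δ = c * Λ ^ (-(d / (m - d))) * r)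
    (h : C ^ 2 * 2 ^ d * 6 ^ m * c ^ (m - d) < 1) :
    C * (2 * Λ * r) ^ d * (2 * δ) ^ m < C⁻¹ * δ ^ d * (r / 3) ^ m := by
  have hs : 0 < m - d := sub_pos.mpr hdm
  have hδ0 : 0 < δ := by rw [hδ]; positivity
  have hpow (t : ℝ) (ht : 0 < t) : t ^ m = t ^ d * t ^ (m - d) := by
    rw [← Real.rpow_add ht, add_sub_cancel, Real.rpow_natCast]
  have hδs : δ ^ (m - d) * Λ ^ d = c ^ (m - d) * r ^ (m - d) := by
    rw [hδ, Real.mul_rpow (by positivity) hr.le, Real.mul_rpow hc.le (by positivity),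
      ← Real.rpow_mul hΛ.le, neg_mul, div_mul_cancel₀ _ hs.ne', Real.rpow_neg hΛ.le]
    field_simp
  have hδm : Λ ^ d * r ^ d * δ ^ m = δ ^ d * r ^ m * c ^ (m - d) := by
    rw [hpow δ hδ0, hpow r hr]
    linear_combination r ^ d * δ ^ d * hδs
  have h6 : (6 : ℝ) ^ m = 2 ^ m * 3 ^ m := by rw [← mul_pow]; norm_num
  calc C * (2 * Λ * r) ^ d * (2 * δ) ^ m = C * 2 ^ d * 2 ^ m * (Λ ^ d * r ^ d * δ ^ m) := by
        rw [Real.mul_rpow (by positivity) hr.le, Real.mul_rpow zero_le_two hΛ.le, mul_pow]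
        ring
    _ = C⁻¹ * δ ^ d * (r / 3) ^ m * (C ^ 2 * 2 ^ d * 6 ^ m * c ^ (m - d)) := by
        rw [hδm, div_pow, h6]
        field_simp
    _ < C⁻¹ * δ ^ d * (r / 3) ^ m := mul_lt_of_lt_one_right (by positivity) h

/-- `μ` is `d`-Ahlfors regular with constant `C` at the points of `Γ`. The measure need not be
concentrated on `Γ`, so `AhlforsRegular` is the case `μ = μH[d].restrict Γ`. -/
def IsAhlforsRegularOn {X : Type*} [PseudoMetricSpace X] [MeasurableSpace X] (μ : Measure X)
    (d C : ℝ) (Γ : Set X) : Prop :=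
  ∀ x ∈ Γ, ∀ r : ℝ, 0 < r →
    ENNReal.ofReal (C⁻¹ * r ^ d) ≤ μ (ball x r) ∧ μ (ball x r) ≤ ENNReal.ofReal (C * r ^ d)

theorem AhlforsRegular.isAhlforsRegularOn_restrict {n : ℕ} {d C₀ : ℝ} {Γ : Set (Euc n)}
    (hΓ : AhlforsRegular n d C₀ Γ) : IsAhlforsRegularOn (μH[d].restrict Γ) d C₀ Γ := by
  intro x hx r hr
  rw [Measure.restrict_apply measurableSet_ball, inter_comm]
  exact hΓ x hx r hr

section Tubes

variable {E : Type*} [NormedAddCommGroup E] [InnerProductSpace ℝ E] [FiniteDimensional ℝ E]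
  [MeasurableSpace E] [BorelSpace E]

theorem mul_pow_finrank_le_of_forall_exists_mem_thickening (P : Submodule ℝ E) {μ : Measure E}
    {Γ : Set E} {x₁ x₂ : E} {δ ρ : ℝ} {a b : ℝ≥0∞} (hδ : 0 < δ) (hρ : 0 < ρ) (hb : b ≠ ∞)
    (hP : x₂ - x₁ ∈ Pᗮ) (hμa : ∀ γ ∈ Γ, a ≤ μ (ball γ δ))
    (hμb : ∀ γ ∈ Γ, μ (ball γ (dist x₁ x₂ + 2 * ρ + 3 * δ)) ≤ b)
    (hΓ : ∀ v : P, ‖v‖ < ρ → ∃ z ∈ segment ℝ (v + x₁) (v + x₂), z ∈ thickening δ Γ) :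
    a * ENNReal.ofReal (ρ ^ Module.finrank ℝ P) ≤
      b * ENNReal.ofReal ((2 * δ) ^ Module.finrank ℝ P) := by
  set π := P.orthogonalProjectionOnto
  have hπ : Measurable π := π.continuous.measurable
  obtain ⟨γ₀, hγ₀, hγ₀T, -⟩ := exists_mem_thickening_segment_dist_orthogonalProjectionOnto_lt P hP
    (v := 0) (by simpa) (hΓ 0 (by simpa))
  set B := ball γ₀ (dist x₁ x₂ + 2 * ρ + 3 * δ)
  have hball : ∀ γ ∈ thickening (ρ + δ) (segment ℝ x₁ x₂), ball γ δ ⊆ B := by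
    intro γ hγ
    have hdist := dist_le_of_mem_thickening_segment (add_pos hρ hδ).le hγ hγ₀T
    exact ball_subset_ball' (by linarith)
  have : IsFiniteMeasure (μ.restrict B) :=
    ⟨by rw [Measure.restrict_apply_univ]; exact (hμb γ₀ hγ₀).trans_lt hb.lt_top⟩
  have hmass : ∀ p ∈ ball (π x₁) ρ, a ≤ (μ.restrict B).map π (ball p (2 * δ)) := by
    intro p hp
    have hv : ‖p - π x₁‖ < ρ := by rwa [← mem_ball_iff_norm]
    obtain ⟨γ, hγ, hγT, hγp⟩ :=
      exists_mem_thickening_segment_dist_orthogonalProjectionOnto_lt P hP hv (hΓ _ hv)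
    rw [add_sub_cancel] at hγp
    rw [Measure.map_apply hπ measurableSet_ball, Measure.restrict_apply (hπ measurableSet_ball)]
    refine (hμa γ hγ).trans (measure_mono fun y hy => ⟨?_, hball γ hγT hy⟩)
    have hπy := (dist_orthogonalProjectionOnto_le P y γ).trans_lt (mem_ball.mp hy)
    exact mem_ball.mpr (by linarith [dist_triangle (π y) (π γ) p])
  calc a * ENNReal.ofReal (ρ ^ Module.finrank ℝ P)
      ≤ (μ.restrict B).map π univ * ENNReal.ofReal ((2 * δ) ^ Module.finrank ℝ P) :=
        mul_pow_finrank_le_measure_univ_mul_pow_finrank _ hρ (by positivity) hmass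
    _ = μ B * ENNReal.ofReal ((2 * δ) ^ Module.finrank ℝ P) := by
      rw [Measure.map_apply hπ .univ, preimage_univ, Measure.restrict_apply_univ]
    _ ≤ b * ENNReal.ofReal ((2 * δ) ^ Module.finrank ℝ P) := by gcongr; exact hμb γ₀ hγ₀

theorem IsAhlforsRegularOn.exists_le_infDist_of_mem_segment {μ : Measure E} {Γ : Set E}
    {d C Λ r δ : ℝ} {m : ℕ} (hΓ : IsAhlforsRegularOn μ d C Γ) (hne : Γ.Nonempty)
    (hm : Module.finrank ℝ E = m + 1) (hC : 0 < C) (hΛ : 1 ≤ Λ) (hr : 0 < r)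
    {x₁ x₂ : E} (hx : dist x₁ x₂ ≤ Λ * r) (hδ : 0 < δ) (hδr : δ ≤ r / 9)
    (h : C * (2 * Λ * r) ^ d * (2 * δ) ^ m < C⁻¹ * δ ^ d * (r / 3) ^ m) :
    ∃ y₁ ∈ ball x₁ (r / 3), ∃ y₂ ∈ ball x₂ (r / 3),
      ∀ z ∈ segment ℝ y₁ y₂, δ ≤ infDist z Γ := by
  have : Nontrivial E := Module.nontrivial_of_finrank_pos (R := ℝ) (by omega)
  obtain ⟨P, hPm, hP⟩ := exists_finrank_add_one_eq_and_mem_orthogonal (x₂ - x₁)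
  obtain rfl : Module.finrank ℝ P = m := by omega
  by_contra! hclose
  have hR : dist x₁ x₂ + 2 * (r / 3) + 3 * δ ≤ 2 * Λ * r := by nlinarith
  have hupper : ∀ γ ∈ Γ, μ (ball γ (dist x₁ x₂ + 2 * (r / 3) + 3 * δ)) ≤
      ENNReal.ofReal (C * (2 * Λ * r) ^ d) := fun γ hγ =>
    (measure_mono (ball_subset_ball hR)).trans (hΓ γ hγ _ (by positivity)).2
  have hmeet : ∀ v : P, ‖v‖ < r / 3 →
      ∃ z ∈ segment ℝ (v + x₁) (v + x₂), z ∈ thickening δ Γ := by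
    intro v hv
    obtain ⟨z, hz, hzΓ⟩ := hclose (v + x₁) (by simpa) (v + x₂) (by simpa)
    exact ⟨z, hz, (mem_thickening_iff_infDist_lt hne).mpr hzΓ⟩
  have hle := mul_pow_finrank_le_of_forall_exists_mem_thickening P hδ (by positivity)
    ENNReal.ofReal_ne_top hP (fun γ hγ => (hΓ γ hγ δ hδ).1) hupper hmeet
  rw [← ENNReal.ofReal_mul (by positivity), ← ENNReal.ofReal_mul (by positivity),
    ENNReal.ofReal_le_ofReal_iff (by positivity)] at hle
  exact h.not_ge hle

theorem statement0_general {d C : ℝ} (hd0 : 0 ≤ d) (hdn : d < (Module.finrank ℝ E : ℝ) - 1)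
    (hC : 0 < C) :
    ∃ c : ℝ, 0 < c ∧
      ∀ (μ : Measure E) (Γ : Set E), Γ.Nonempty → IsAhlforsRegularOn μ d C Γ →
        ∀ Λ : ℝ, 1 ≤ Λ → ∀ r : ℝ, 0 < r → ∀ x₁ x₂ : E, dist x₁ x₂ ≤ Λ * r →
          ∃ y₁ ∈ ball x₁ (r / 3), ∃ y₂ ∈ ball x₂ (r / 3),
            ∀ z ∈ segment ℝ y₁ y₂,
              c * Λ ^ (-(d / ((Module.finrank ℝ E : ℝ) - d - 1))) * r ≤ infDist z Γ := by
  have hE : 0 < Module.finrank ℝ E := by exact_mod_cast (by linarith : (0 : ℝ) < Module.finrank ℝ E)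
  obtain ⟨m, hm⟩ : ∃ m, Module.finrank ℝ E = m + 1 := Nat.exists_eq_add_one.mpr hE
  rw [hm, Nat.cast_add_one, add_sub_cancel_right] at hdn
  have hs : 0 < m - d := sub_pos.mpr hdn
  have hexp : ((Module.finrank ℝ E : ℝ) - d - 1) = m - d := by rw [hm]; push_cast; ring
  obtain ⟨c, hc, hc9, hcK⟩ :=
    exists_pos_le_mul_rpow_lt_one (C ^ 2 * 2 ^ d * 6 ^ m) (by norm_num : (0 : ℝ) < 1 / 9) hs
  refine ⟨c, hc, fun μ Γ hne hΓ Λ hΛ r hr x₁ x₂ hx => ?_⟩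
  have hΛ0 : 0 < Λ := one_pos.trans_le hΛ
  have hΛ1 : Λ ^ (-(d / (m - d))) ≤ 1 :=
    Real.rpow_le_one_of_one_le_of_nonpos hΛ (neg_nonpos.mpr (by positivity))
  have hδr : c * Λ ^ (-(d / (m - d))) * r ≤ r / 9 := calc
    c * Λ ^ (-(d / (m - d))) * r ≤ 1 / 9 * 1 * r := by gcongr
    _ = r / 9 := by ring
  rw [hexp]
  exact hΓ.exists_le_infDist_of_mem_segment hne hm hC hΛ hr hx (by positivity) hδr
    (mul_rpow_mul_pow_lt_of_scaled_radius hdn hC hc hΛ0 hr rfl hcK)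

end Tubes

/-- existence of thick tubes (Harnack chains) joining interior points. -/
theorem statement0 (n : ℕ) (hn : 2 ≤ n) (d C₀ : ℝ) (hd0 : 0 < d)
    (hdn : d < (n : ℝ) - 1) (hC₀ : 1 ≤ C₀) :
    ∃ c : ℝ, 0 < c ∧
      ∀ Γ : Set (Euc n), Γ.Nonempty → IsClosed Γ → AhlforsRegular n d C₀ Γ →
        ∀ Λ : ℝ, 1 ≤ Λ → ∀ r : ℝ, 0 < r → ∀ x₁ x₂ : Euc n,
          x₁ ∉ Γ → x₂ ∉ Γ → r ≤ infDist x₁ Γ → r ≤ infDist x₂ Γ → dist x₁ x₂ ≤ Λ * r →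
          ∃ y₁ ∈ ball x₁ (r / 3), ∃ y₂ ∈ ball x₂ (r / 3),
            ∀ z ∈ segment ℝ y₁ y₂,
              c * Λ ^ (-(d / ((n : ℝ) - d - 1))) * r ≤ infDist z Γ := by
  obtain ⟨c, hc, h⟩ := statement0_general (E := Euc n) (C := C₀) hd0.le
    (by rwa [finrank_euclideanSpace_fin]) (by linarith)
  rw [finrank_euclideanSpace_fin] at h
  exact ⟨c, hc, fun Γ hne _ hΓ Λ hΛ r hr x₁ x₂ _ _ _ _ =>
    h _ Γ hne hΓ.isAhlforsRegularOn_restrict Λ hΛ r hr x₁ x₂⟩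
end
end

section
/- There exists a constant C ≥ 1, depending only on n, d, and C₀, such that for every x ∈ ℝⁿ and all radii 0 < s < r, C⁻¹ (r/s)^{d+1} ≤ m(B(x,r))/m(B(x,s)) ≤ C (r/s)ⁿ. In particular, m is a doubling measure on ℝⁿ. -/
open MeasureTheory Metric Set Filter
open scoped ENNReal NNReal Topology

noncomputable section

/-!
If `t ≤ R` and `z ∈ Γ`, counting pairs `(y, p)` with `dist y p < 3 * t` by Fubini, where `y` is at
distance at most `t` from `Γ`, shows that the `t`-tube around `Γ` inside `B(z, R)` has volume
`≲ t ^ (n - d) * R ^ d`. Summing `δ ^ (-γ)` over dyadic distance shells gives a geometric series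
when `γ < n - d`, hence `m(B(z, R)) ≲ R ^ (n - γ)`; for `γ = n - 1 - d` this is `R ^ (d + 1)`.
Away from `Γ` the weight is nearly constant on balls, so for every ball
`m(B(x, r)) ≈ r ^ n * max r (δ x) ^ (-γ)`, and the ratio estimates are elementary properties of the
right-hand side.
-/

section Profile

variable {N γ δ r s : ℝ}

/-- The size `r ^ N * max r δ ^ (-γ)` of the `infDistMeasure` of a ball of radius `r` whose center
is at distance `δ` from `Γ`. -/
def ballProfile (N γ δ r : ℝ) : ℝ :=
  r ^ N * max r δ ^ (-γ)

lemma ballProfile_nonneg (hr : 0 ≤ r) : 0 ≤ ballProfile N γ δ r :=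
  mul_nonneg (Real.rpow_nonneg hr _) (Real.rpow_nonneg (hr.trans (le_max_left _ _)) _)

lemma ballProfile_le_mul_ballProfile (hγ : 0 ≤ γ) (hs : 0 < s) (hsr : s ≤ r) :
    ballProfile N γ δ r ≤ (r / s) ^ N * ballProfile N γ δ s := by
  have hr : 0 < r := hs.trans_le hsr
  have hmax : max r δ ^ (-γ) ≤ max s δ ^ (-γ) :=
    Real.rpow_le_rpow_of_nonpos (lt_max_of_lt_left hs) (max_le_max_right δ hsr) (by linarith)
  calc r ^ N * max r δ ^ (-γ) ≤ r ^ N * max s δ ^ (-γ) := by gcongr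
    _ = (r / s) ^ N * (s ^ N * max s δ ^ (-γ)) := by
      rw [Real.div_rpow hr.le hs.le]
      field_simp

lemma mul_ballProfile_le_ballProfile (hγ : 0 ≤ γ) (hs : 0 < s) (hsr : s ≤ r) :
    (r / s) ^ (N - γ) * ballProfile N γ δ s ≤ ballProfile N γ δ r := by
  have hr : 0 < r := hs.trans_le hsr
  have hrs : 0 < r / s := div_pos hr hs
  have hmaxs : 0 < max s δ := lt_max_of_lt_left hs
  have hmax : max r δ ≤ r / s * max s δ := by
    rw [mul_max_of_nonneg _ _ hrs.le, div_mul_cancel₀ _ hs.ne']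
    rcases le_total δ r with hδ | hδ
    · exact (max_eq_left hδ).trans_le (le_max_left _ _)
    · exact max_le_max_left r
        (le_mul_of_one_le_left (hr.le.trans hδ) ((one_le_div hs).2 hsr))
  have hrpow : (r / s) ^ (-γ) * max s δ ^ (-γ) ≤ max r δ ^ (-γ) := by
    rw [← Real.mul_rpow hrs.le hmaxs.le]
    exact Real.rpow_le_rpow_of_nonpos (lt_max_of_lt_left hr) hmax (by linarith)
  calc (r / s) ^ (N - γ) * (s ^ N * max s δ ^ (-γ))
      = ((r / s) ^ N * s ^ N) * ((r / s) ^ (-γ) * max s δ ^ (-γ)) := by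
        rw [sub_eq_add_neg, Real.rpow_add hrs]
        ring
    _ = r ^ N * ((r / s) ^ (-γ) * max s δ ^ (-γ)) := by
        rw [← Real.mul_rpow hrs.le hs.le, div_mul_cancel₀ _ hs.ne']
    _ ≤ r ^ N * max r δ ^ (-γ) := by gcongr

lemma rpow_mul_tube_bound_eq (N d γ : ℝ) {R : ℝ} (hR : 0 < R) (k : ℕ) :
    (R * 2⁻¹ ^ (k + 1)) ^ (-γ) * ((R * 2⁻¹ ^ k) ^ (N - d) * R ^ d) =
      2 ^ γ * R ^ (N - γ) * ((2⁻¹ : ℝ) ^ (N - d - γ)) ^ k := by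
  have hk : (0 : ℝ) < 2⁻¹ ^ k := by positivity
  have hstep : (2⁻¹ : ℝ) ^ (-γ) = 2 ^ γ := by
    rw [Real.rpow_neg (by norm_num), Real.inv_rpow zero_le_two, inv_inv]
  have hpowR : R ^ (N - γ) = R ^ (-γ) * R ^ (N - d) * R ^ d := by
    rw [← Real.rpow_add hR, ← Real.rpow_add hR]
    ring_nf
  have hpowk : ((2⁻¹ : ℝ) ^ (N - d - γ)) ^ k = (2⁻¹ ^ k) ^ (-γ) * (2⁻¹ ^ k) ^ (N - d) := by
    rw [← Real.rpow_add hk, ← Real.rpow_natCast, ← Real.rpow_natCast, ← Real.rpow_mul (by norm_num),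
      ← Real.rpow_mul (by norm_num)]
    ring_nf
  rw [pow_succ, ← mul_assoc R (2⁻¹ ^ k) 2⁻¹, Real.mul_rpow (mul_pos hR hk).le (by norm_num),
    Real.mul_rpow hR.le hk.le, Real.mul_rpow hR.le hk.le, hstep, hpowR, hpowk]
  ring

end Profile

section MetricMeasure

universe u

variable {X : Type u} [PseudoMetricSpace X] {Γ : Set X} {N A d C₀ γ : ℝ}

/-- The points of `ball z R` whose distance to `Γ` lies in `(R / 2 ^ (k + 1), R / 2 ^ k]`. -/
def dyadicShell (Γ : Set X) (z : X) (R : ℝ) (k : ℕ) : Set X :=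
  {y ∈ ball z R | R * 2⁻¹ ^ (k + 1) < infDist y Γ ∧ infDist y Γ ≤ R * 2⁻¹ ^ k}

lemma dyadicShell_subset_cthickening_inter_ball (z : X) (R : ℝ) (k : ℕ) (hΓ : Γ.Nonempty) :
    dyadicShell Γ z R k ⊆ cthickening (R * 2⁻¹ ^ k) Γ ∩ ball z R := fun _ hy =>
  ⟨mem_cthickening_iff.2 ((ENNReal.le_ofReal_iff_toReal_le (infEDist_ne_top hΓ)
    (infDist_nonneg.trans hy.2.2)).2 hy.2.2), hy.1⟩

lemma exists_mem_dyadicShell {z y : X} {R : ℝ} (hz : z ∈ Γ) (hy : y ∈ ball z R)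
    (hpos : 0 < infDist y Γ) : ∃ k, y ∈ dyadicShell Γ z R k := by
  have hlt : infDist y Γ < R := (infDist_le_dist_of_mem hz).trans_lt hy
  have hR : 0 < R := hpos.trans hlt
  obtain ⟨k, hk, hk'⟩ := exists_nat_pow_near_of_lt_one (div_pos hpos hR)
    ((div_le_one hR).2 hlt.le) (by norm_num : (0 : ℝ) < 2⁻¹) (by norm_num)
  exact ⟨k, hy, (lt_div_iff₀' hR).1 hk, (div_le_iff₀' hR).1 hk'⟩

variable [MeasurableSpace X] {μ ν : Measure X}

/-- `μ` is Ahlfors regular of dimension `d` with constant `C` at the points of `Γ`. The measure is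
not restricted to `Γ`: regularity of the set `Γ` is regularity of `μH[d].restrict Γ` on `Γ`, and
regularity of the whole space is the case `Γ = univ`. -/
structure IsAhlforsRegularOn_s2 (μ : Measure X) (d C : ℝ) (Γ : Set X) : Prop where
  const_pos : 0 < C
  le_measure_ball : ∀ ⦃x⦄, x ∈ Γ → ∀ ⦃r : ℝ⦄, 0 < r → ENNReal.ofReal (C⁻¹ * r ^ d) ≤ μ (ball x r)
  measure_ball_le : ∀ ⦃x⦄, x ∈ Γ → ∀ ⦃r : ℝ⦄, 0 < r → μ (ball x r) ≤ ENNReal.ofReal (C * r ^ d)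

/-- The measure with density `dist(·, Γ) ^ (-γ)` with respect to `ν`. On the closure of `Γ` the
density takes the junk value `0 ^ (-γ) = 0` when `γ ≠ 0`. -/
def infDistMeasure (ν : Measure X) (Γ : Set X) (γ : ℝ) : Measure X :=
  ν.withDensity fun x => ENNReal.ofReal (infDist x Γ ^ (-γ))

/-- The factor `K` in the bound `K * R ^ (N - γ)` for the `infDistMeasure` of a ball of radius `R`
centered on `Γ`: the constant of the tube estimate times the sum of the dyadic geometric series. -/
def centeredBallConst (N A d C₀ γ : ℝ) : ℝ :=
  A * C₀ ^ 2 * 3 ^ N * 4 ^ d * 2 ^ γ * (1 - (2⁻¹ : ℝ) ^ (N - d - γ))⁻¹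

/-- The factor comparing the `infDistMeasure` of an arbitrary ball with `ballProfile` from above:
the first entry of the maximum is for balls far from `Γ`, the second for balls near `Γ`. -/
def upperBallConst (N A d C₀ γ : ℝ) : ℝ :=
  2 ^ γ * max A (centeredBallConst N A d C₀ γ * 3 ^ (N - γ))

/-- The quotient of the constants in the upper and lower bounds of the `infDistMeasure` of a ball
by `ballProfile`. -/
def ratioConst (N A d C₀ γ : ℝ) : ℝ :=
  upperBallConst N A d C₀ γ / (A⁻¹ * 2 ^ (-γ))

lemma IsAhlforsRegularOn_s2.measure_ball_lt_top (hμ : IsAhlforsRegularOn_s2 μ d C₀ Γ) {x : X}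
    (hx : x ∈ Γ) {r : ℝ} (hr : 0 < r) : μ (ball x r) < ∞ :=
  (hμ.measure_ball_le hx hr).trans_lt ENNReal.ofReal_lt_top

lemma centeredBallConst_pos (hA : 0 < A) (hC₀ : 0 < C₀) (hγ : γ < N - d) :
    0 < centeredBallConst N A d C₀ γ := by
  have hq : (2⁻¹ : ℝ) ^ (N - d - γ) < 1 :=
    Real.rpow_lt_one (by norm_num) (by norm_num) (by linarith)
  have := inv_pos.2 (sub_pos.2 hq)
  unfold centeredBallConst
  positivity

lemma upperBallConst_pos (hA : 0 < A) : 0 < upperBallConst N A d C₀ γ :=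
  mul_pos (by positivity) (lt_max_of_lt_left hA)

lemma ratioConst_pos (hA : 0 < A) : 0 < ratioConst N A d C₀ γ :=
  div_pos (upperBallConst_pos hA) (by positivity)

variable [BorelSpace X]

lemma measurableSet_dyadicShell (Γ : Set X) (z : X) (R : ℝ) (k : ℕ) :
    MeasurableSet (dyadicShell Γ z R k) :=
  measurableSet_ball.inter ((measurableSet_lt measurable_const measurable_infDist).inter
    (measurableSet_le measurable_infDist measurable_const))

lemma infDistMeasure_ball (x : X) (r : ℝ) :
    infDistMeasure ν Γ γ (ball x r) =
      ∫⁻ y in ball x r, ENNReal.ofReal (infDist y Γ ^ (-γ)) ∂ν :=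
  withDensity_apply _ measurableSet_ball

lemma infDistMeasure_ball_le_of_two_mul_le_infDist (hν : IsAhlforsRegularOn_s2 ν N A univ)
    (hγ : 0 ≤ γ) {x : X} {r : ℝ} (hr : 0 < r) (hx : 2 * r ≤ infDist x Γ) :
    infDistMeasure ν Γ γ (ball x r) ≤
      ENNReal.ofReal (A * 2 ^ γ * ballProfile N γ (infDist x Γ) r) := by
  set δ := infDist x Γ
  have hδ : 0 < δ := by linarith
  have hA := hν.const_pos
  have hdensity : ∀ y ∈ ball x r,
      ENNReal.ofReal (infDist y Γ ^ (-γ)) ≤ ENNReal.ofReal ((δ / 2) ^ (-γ)) := by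
    intro y hy
    have hxy : δ ≤ infDist y Γ + dist x y := infDist_le_infDist_add_dist
    rw [mem_ball'] at hy
    exact ENNReal.ofReal_le_ofReal
      (Real.rpow_le_rpow_of_nonpos (by positivity) (by linarith) (by linarith))
  calc infDistMeasure ν Γ γ (ball x r)
      ≤ ∫⁻ _ in ball x r, ENNReal.ofReal ((δ / 2) ^ (-γ)) ∂ν := by
        rw [infDistMeasure_ball]
        exact setLIntegral_mono' measurableSet_ball hdensity
    _ ≤ ENNReal.ofReal ((δ / 2) ^ (-γ)) * ENNReal.ofReal (A * r ^ N) := by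
        rw [setLIntegral_const]
        gcongr
        exact hν.measure_ball_le (mem_univ x) hr
    _ = ENNReal.ofReal (A * 2 ^ γ * ballProfile N γ δ r) := by
        rw [← ENNReal.ofReal_mul (by positivity), ballProfile,
          max_eq_right (by linarith : r ≤ δ), Real.div_rpow hδ.le zero_le_two,
          Real.rpow_neg zero_le_two]
        congr 1
        field_simp

variable [SecondCountableTopology X]

lemma lintegral_measure_ball_comm (μ ν : Measure X) [SFinite μ] [SFinite ν] (t : ℝ) :
    ∫⁻ x, μ (ball x t) ∂ν = ∫⁻ y, ν (ball y t) ∂μ := by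
  have hmeas : MeasurableSet {p : X × X | dist p.1 p.2 < t} :=
    (isOpen_lt continuous_dist continuous_const).measurableSet
  calc ∫⁻ x, μ (ball x t) ∂ν = (ν.prod μ) {p : X × X | dist p.1 p.2 < t} := by
        rw [Measure.prod_apply hmeas]
        simp only [ball, dist_comm, preimage_ofPred_eq]
    _ = ∫⁻ y, ν (ball y t) ∂μ := by
        rw [Measure.prod_apply_symm hmeas]
        rfl

lemma mul_measure_cthickening_inter_ball_le (hν : IsAhlforsRegularOn_s2 ν N A univ)
    (hμ : IsAhlforsRegularOn_s2 μ d C₀ Γ) {z : X} (hz : z ∈ Γ) {t R : ℝ} (ht : 0 < t) (htR : t ≤ R) :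
    ENNReal.ofReal (C₀⁻¹ * t ^ d) * ν (cthickening t Γ ∩ ball z R) ≤
      ENNReal.ofReal (A * (3 * t) ^ N) * ENNReal.ofReal (C₀ * (4 * R) ^ d) := by
  have hR : 0 < R := ht.trans_le htR
  set T := cthickening t Γ ∩ ball z R
  have hTmeas : MeasurableSet T := isClosed_cthickening.measurableSet.inter measurableSet_ball
  have hfinν : IsFiniteMeasure (ν.restrict T) := isFiniteMeasure_restrict.2
    ((measure_mono inter_subset_right).trans_lt (hν.measure_ball_lt_top (mem_univ z) hR)).ne
  have hfinμ : IsFiniteMeasure (μ.restrict (ball z (4 * R))) :=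
    isFiniteMeasure_restrict.2 (hμ.measure_ball_lt_top hz (by positivity)).ne
  have hlower : ∀ y ∈ T,
      ENNReal.ofReal (C₀⁻¹ * t ^ d) ≤ μ.restrict (ball z (4 * R)) (ball y (3 * t)) := by
    rintro y ⟨hyΓ, hyz⟩
    obtain ⟨q, hq, hyq⟩ := mem_thickening_iff.1
      (cthickening_subset_thickening' (by positivity) (by linarith : t < 2 * t) Γ hyΓ)
    rw [mem_ball] at hyz
    rw [Measure.restrict_apply measurableSet_ball,
      inter_eq_left.2 (ball_subset_ball' (by linarith))]
    exact (hμ.le_measure_ball hq ht).trans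
      (measure_mono (ball_subset_ball' (by rw [dist_comm]; linarith)))
  calc ENNReal.ofReal (C₀⁻¹ * t ^ d) * ν T
      ≤ ∫⁻ y in T, μ.restrict (ball z (4 * R)) (ball y (3 * t)) ∂ν := by
        rw [← setLIntegral_const]
        exact setLIntegral_mono' hTmeas hlower
    _ = ∫⁻ p in ball z (4 * R), ν.restrict T (ball p (3 * t)) ∂μ :=
        lintegral_measure_ball_comm _ _ _
    _ ≤ ∫⁻ _ in ball z (4 * R), ENNReal.ofReal (A * (3 * t) ^ N) ∂μ :=
        lintegral_mono fun p => (Measure.restrict_apply_le _ _).trans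
          (hν.measure_ball_le (mem_univ p) (by positivity))
    _ ≤ ENNReal.ofReal (A * (3 * t) ^ N) * ENNReal.ofReal (C₀ * (4 * R) ^ d) := by
        rw [setLIntegral_const]
        gcongr
        exact hμ.measure_ball_le hz (by positivity)

lemma measure_cthickening_inter_ball_le (hν : IsAhlforsRegularOn_s2 ν N A univ)
    (hμ : IsAhlforsRegularOn_s2 μ d C₀ Γ) {z : X} (hz : z ∈ Γ) {t R : ℝ} (ht : 0 < t) (htR : t ≤ R) :
    ν (cthickening t Γ ∩ ball z R) ≤
      ENNReal.ofReal (A * C₀ ^ 2 * 3 ^ N * 4 ^ d * (t ^ (N - d) * R ^ d)) := by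
  have hR : 0 < R := ht.trans_le htR
  have hA := hν.const_pos
  have hC₀ := hμ.const_pos
  have hpos : 0 < C₀⁻¹ * t ^ d := by positivity
  have hconst : A * C₀ ^ 2 * 3 ^ N * 4 ^ d * (t ^ (N - d) * R ^ d) =
      A * (3 * t) ^ N * (C₀ * (4 * R) ^ d) / (C₀⁻¹ * t ^ d) := by
    rw [Real.mul_rpow zero_le_three ht.le, Real.mul_rpow zero_le_four hR.le, Real.rpow_sub ht]
    field_simp
  rw [hconst, ENNReal.ofReal_div_of_pos hpos, ENNReal.ofReal_mul (by positivity),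
    ENNReal.le_div_iff_mul_le (.inl (ENNReal.ofReal_pos.2 hpos).ne') (.inl ENNReal.ofReal_ne_top),
    mul_comm]
  exact mul_measure_cthickening_inter_ball_le hν hμ hz ht htR

lemma IsAhlforsRegularOn_s2.measure_closure_eq_zero (hμ : IsAhlforsRegularOn_s2 μ d C₀ Γ)
    (hν : IsAhlforsRegularOn_s2 ν N A univ) (hΓ : Γ.Nonempty) (hdN : d < N) : ν (closure Γ) = 0 := by
  obtain ⟨z, hz⟩ := hΓ
  have hball : ∀ k : ℕ, ν (closure Γ ∩ ball z (k + 1)) = 0 := by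
    intro k
    set c := A * C₀ ^ 2 * 3 ^ N * 4 ^ d
    have htube : ∀ᶠ t : ℝ in 𝓝[>] 0, ν (closure Γ ∩ ball z (k + 1)) ≤
        ENNReal.ofReal (c * (t ^ (N - d) * (k + 1) ^ d)) := by
      filter_upwards [Ioc_mem_nhdsGT (show (0 : ℝ) < k + 1 by positivity)] with t ht
      exact (measure_mono (inter_subset_inter_left _ (closure_subset_cthickening t Γ))).trans
        (measure_cthickening_inter_ball_le hν hμ hz ht.1 ht.2)
    have hlim : Tendsto (fun t : ℝ => ENNReal.ofReal (c * (t ^ (N - d) * (k + 1) ^ d)))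
        (𝓝[>] 0) (𝓝 0) := by
      have hrpow : Tendsto (fun t : ℝ => t ^ (N - d)) (𝓝[>] 0) (𝓝 0) := by
        simpa [(sub_pos.2 hdN).ne'] using
          ((Real.continuousAt_rpow_const 0 (N - d) (.inr (sub_nonneg.2 hdN.le))).tendsto.mono_left
            nhdsWithin_le_nhds)
      simpa using ENNReal.tendsto_ofReal ((hrpow.mul_const (((k : ℝ) + 1) ^ d)).const_mul c)
    exact nonpos_iff_eq_zero.1 (ge_of_tendsto hlim htube)
  rw [← inter_univ (closure Γ), ← iUnion_ball_nat_succ z, inter_iUnion]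
  exact measure_iUnion_null hball

lemma IsAhlforsRegularOn_s2.ae_infDist_pos (hμ : IsAhlforsRegularOn_s2 μ d C₀ Γ)
    (hν : IsAhlforsRegularOn_s2 ν N A univ) (hΓ : Γ.Nonempty) (hdN : d < N) :
    ∀ᵐ y ∂ν, 0 < infDist y Γ := by
  filter_upwards [measure_eq_zero_iff_ae_notMem.1
    (hμ.measure_closure_eq_zero hν hΓ hdN)] with y hy
  exact (infDist_pos_iff_notMem_closure hΓ).1 hy

lemma setLIntegral_dyadicShell_le (hν : IsAhlforsRegularOn_s2 ν N A univ)
    (hμ : IsAhlforsRegularOn_s2 μ d C₀ Γ) (hγ : 0 ≤ γ) {z : X} (hz : z ∈ Γ) {R : ℝ} (hR : 0 < R)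
    (k : ℕ) :
    ∫⁻ y in dyadicShell Γ z R k, ENNReal.ofReal (infDist y Γ ^ (-γ)) ∂ν ≤
      ENNReal.ofReal (A * C₀ ^ 2 * 3 ^ N * 4 ^ d * 2 ^ γ * R ^ (N - γ) *
        ((2⁻¹ : ℝ) ^ (N - d - γ)) ^ k) := by
  have hdensity : ∀ y ∈ dyadicShell Γ z R k, ENNReal.ofReal (infDist y Γ ^ (-γ)) ≤
      ENNReal.ofReal ((R * 2⁻¹ ^ (k + 1)) ^ (-γ)) := fun y hy =>
    ENNReal.ofReal_le_ofReal
      (Real.rpow_le_rpow_of_nonpos (by positivity) hy.2.1.le (by linarith))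
  have hradius : R * 2⁻¹ ^ k ≤ R :=
    mul_le_of_le_one_right hR.le (pow_le_one₀ (by norm_num) (by norm_num))
  calc ∫⁻ y in dyadicShell Γ z R k, ENNReal.ofReal (infDist y Γ ^ (-γ)) ∂ν
      ≤ ENNReal.ofReal ((R * 2⁻¹ ^ (k + 1)) ^ (-γ)) * ν (dyadicShell Γ z R k) := by
        rw [← setLIntegral_const]
        exact setLIntegral_mono' (measurableSet_dyadicShell Γ z R k) hdensity
    _ ≤ ENNReal.ofReal ((R * 2⁻¹ ^ (k + 1)) ^ (-γ)) * ENNReal.ofReal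
          (A * C₀ ^ 2 * 3 ^ N * 4 ^ d * ((R * 2⁻¹ ^ k) ^ (N - d) * R ^ d)) := by
        gcongr
        exact (measure_mono (dyadicShell_subset_cthickening_inter_ball z R k ⟨z, hz⟩)).trans
          (measure_cthickening_inter_ball_le hν hμ hz (by positivity) hradius)
    _ = _ := by
        rw [← ENNReal.ofReal_mul (by positivity), mul_left_comm, rpow_mul_tube_bound_eq N d γ hR]
        ring_nf

lemma infDistMeasure_ball_le_of_mem (hν : IsAhlforsRegularOn_s2 ν N A univ)
    (hμ : IsAhlforsRegularOn_s2 μ d C₀ Γ) (hγ : 0 ≤ γ) (hγd : γ < N - d) {z : X} (hz : z ∈ Γ)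
    {R : ℝ} (hR : 0 < R) :
    infDistMeasure ν Γ γ (ball z R) ≤
      ENNReal.ofReal (centeredBallConst N A d C₀ γ * R ^ (N - γ)) := by
  set c := A * C₀ ^ 2 * 3 ^ N * 4 ^ d * 2 ^ γ * R ^ (N - γ)
  set q := (2⁻¹ : ℝ) ^ (N - d - γ)
  have hA := hν.const_pos
  have hq0 : 0 ≤ q := by positivity
  have hq1 : q < 1 := Real.rpow_lt_one (by norm_num) (by norm_num) (by linarith)
  have hcover : ball z R ≤ᵐ[ν] ⋃ k, dyadicShell Γ z R k := by
    filter_upwards [hμ.ae_infDist_pos hν ⟨z, hz⟩ (by linarith)]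
      with y hpos hy
    exact mem_iUnion.2 (exists_mem_dyadicShell hz hy hpos)
  calc infDistMeasure ν Γ γ (ball z R)
      ≤ ∫⁻ y in ⋃ k, dyadicShell Γ z R k, ENNReal.ofReal (infDist y Γ ^ (-γ)) ∂ν := by
        rw [infDistMeasure_ball]
        exact lintegral_mono' (Measure.restrict_mono_ae hcover) le_rfl
    _ ≤ ∑' k, ∫⁻ y in dyadicShell Γ z R k, ENNReal.ofReal (infDist y Γ ^ (-γ)) ∂ν :=
        lintegral_iUnion_le _ _
    _ ≤ ∑' k, ENNReal.ofReal (c * q ^ k) :=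
        ENNReal.tsum_le_tsum (setLIntegral_dyadicShell_le hν hμ hγ hz hR)
    _ = ENNReal.ofReal (c * (1 - q)⁻¹) := by
        rw [← ENNReal.ofReal_tsum_of_nonneg (fun k => by positivity)
          ((summable_geometric_of_lt_one hq0 hq1).mul_left c), tsum_mul_left,
          tsum_geometric_of_lt_one hq0 hq1]
    _ = _ := by
        rw [centeredBallConst, mul_right_comm]

lemma infDistMeasure_ball_le_of_infDist_lt (hν : IsAhlforsRegularOn_s2 ν N A univ)
    (hμ : IsAhlforsRegularOn_s2 μ d C₀ Γ) (hΓ : Γ.Nonempty) (hγ : 0 ≤ γ) (hγd : γ < N - d)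
    {x : X} {r : ℝ} (hr : 0 < r) (hx : infDist x Γ < 2 * r) :
    infDistMeasure ν Γ γ (ball x r) ≤
      ENNReal.ofReal (2 ^ γ * (centeredBallConst N A d C₀ γ * 3 ^ (N - γ)) *
        ballProfile N γ (infDist x Γ) r) := by
  obtain ⟨z, hz, hxz⟩ := (infDist_lt_iff hΓ).1 hx
  set M := max r (infDist x Γ) with hM
  have hM0 : 0 < M := lt_max_of_lt_left hr
  have hMr : M / 2 ≤ r := by
    rw [div_le_iff₀' two_pos]
    exact max_le (by linarith) hx.le
  have hrpow : r ^ (-γ) ≤ 2 ^ γ * M ^ (-γ) := by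
    calc r ^ (-γ) ≤ (M / 2) ^ (-γ) :=
          Real.rpow_le_rpow_of_nonpos (by positivity) hMr (by linarith)
      _ = 2 ^ γ * M ^ (-γ) := by
          rw [Real.div_rpow hM0.le zero_le_two, Real.rpow_neg zero_le_two]
          field_simp
  have hK := (centeredBallConst_pos hν.const_pos hμ.const_pos hγd).le
  calc infDistMeasure ν Γ γ (ball x r) ≤ infDistMeasure ν Γ γ (ball z (3 * r)) :=
        measure_mono (ball_subset_ball' (by linarith))
    _ ≤ ENNReal.ofReal (centeredBallConst N A d C₀ γ * (3 * r) ^ (N - γ)) :=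
        infDistMeasure_ball_le_of_mem hν hμ hγ hγd hz (by positivity)
    _ ≤ _ := ENNReal.ofReal_le_ofReal ?_
  calc centeredBallConst N A d C₀ γ * (3 * r) ^ (N - γ)
      = centeredBallConst N A d C₀ γ * 3 ^ (N - γ) * (r ^ N * r ^ (-γ)) := by
        rw [Real.mul_rpow zero_le_three hr.le, ← Real.rpow_add hr, sub_eq_add_neg, mul_assoc]
    _ ≤ centeredBallConst N A d C₀ γ * 3 ^ (N - γ) * (r ^ N * (2 ^ γ * M ^ (-γ))) := by gcongr
    _ = 2 ^ γ * (centeredBallConst N A d C₀ γ * 3 ^ (N - γ)) *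
          ballProfile N γ (infDist x Γ) r := by
        rw [ballProfile, ← hM]
        ring

lemma infDistMeasure_ball_le (hν : IsAhlforsRegularOn_s2 ν N A univ)
    (hμ : IsAhlforsRegularOn_s2 μ d C₀ Γ) (hΓ : Γ.Nonempty) (hγ : 0 ≤ γ) (hγd : γ < N - d)
    (x : X) {r : ℝ} (hr : 0 < r) :
    infDistMeasure ν Γ γ (ball x r) ≤
      ENNReal.ofReal (upperBallConst N A d C₀ γ * ballProfile N γ (infDist x Γ) r) := by
  have hprofile := ballProfile_nonneg (N := N) (γ := γ) (δ := infDist x Γ) hr.le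
  rcases le_or_gt (2 * r) (infDist x Γ) with hfar | hnear
  · refine (infDistMeasure_ball_le_of_two_mul_le_infDist hν hγ hr hfar).trans
      (ENNReal.ofReal_le_ofReal ?_)
    rw [mul_comm A]
    exact mul_le_mul_of_nonneg_right (by unfold upperBallConst; gcongr; exact le_max_left _ _)
      hprofile
  · refine (infDistMeasure_ball_le_of_infDist_lt hν hμ hΓ hγ hγd hr hnear).trans
      (ENNReal.ofReal_le_ofReal ?_)
    exact mul_le_mul_of_nonneg_right (by unfold upperBallConst; gcongr; exact le_max_right _ _)
      hprofile

lemma le_infDistMeasure_ball (hν : IsAhlforsRegularOn_s2 ν N A univ)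
    (hμ : IsAhlforsRegularOn_s2 μ d C₀ Γ) (hΓ : Γ.Nonempty) (hγ : 0 ≤ γ) (hdN : d < N)
    (x : X) {r : ℝ} (hr : 0 < r) :
    ENNReal.ofReal (A⁻¹ * 2 ^ (-γ) * ballProfile N γ (infDist x Γ) r) ≤
      infDistMeasure ν Γ γ (ball x r) := by
  set M := max r (infDist x Γ) with hM
  have hM0 : 0 < M := lt_max_of_lt_left hr
  have hdensity : ∀ᵐ y ∂ν.restrict (ball x r),
      ENNReal.ofReal ((2 * M) ^ (-γ)) ≤ ENNReal.ofReal (infDist y Γ ^ (-γ)) := by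
    filter_upwards [ae_restrict_of_ae (hμ.ae_infDist_pos hν hΓ hdN),
      ae_restrict_mem measurableSet_ball] with y hpos hy
    have hle : infDist y Γ ≤ 2 * M := by
      have hyx : infDist y Γ ≤ infDist x Γ + dist y x := infDist_le_infDist_add_dist
      have hy' : dist y x < r := hy
      linarith [le_max_left r (infDist x Γ), le_max_right r (infDist x Γ)]
    exact ENNReal.ofReal_le_ofReal (Real.rpow_le_rpow_of_nonpos hpos hle (by linarith))
  calc ENNReal.ofReal (A⁻¹ * 2 ^ (-γ) * ballProfile N γ (infDist x Γ) r)
      = ENNReal.ofReal ((2 * M) ^ (-γ)) * ENNReal.ofReal (A⁻¹ * r ^ N) := by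
        rw [← ENNReal.ofReal_mul (by positivity), ballProfile, ← hM,
          Real.mul_rpow zero_le_two hM0.le]
        ring_nf
    _ ≤ ENNReal.ofReal ((2 * M) ^ (-γ)) * ν (ball x r) := by
        gcongr
        exact hν.le_measure_ball (mem_univ x) hr
    _ ≤ infDistMeasure ν Γ γ (ball x r) := by
        rw [infDistMeasure_ball, ← setLIntegral_const]
        exact lintegral_mono_ae hdensity

lemma infDistMeasure_ball_le_mul (hν : IsAhlforsRegularOn_s2 ν N A univ)
    (hμ : IsAhlforsRegularOn_s2 μ d C₀ Γ) (hΓ : Γ.Nonempty) (hγ : 0 ≤ γ) (hγd : γ < N - d)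
    (x : X) {r s : ℝ} (hs : 0 < s) (hsr : s ≤ r) :
    infDistMeasure ν Γ γ (ball x r) ≤
      ENNReal.ofReal (ratioConst N A d C₀ γ * (r / s) ^ N) * infDistMeasure ν Γ γ (ball x s) := by
  have hr : 0 < r := hs.trans_le hsr
  have hA := hν.const_pos
  have hb := upperBallConst_pos (N := N) (d := d) (C₀ := C₀) (γ := γ) hA
  have hκ := ratioConst_pos (N := N) (d := d) (C₀ := C₀) (γ := γ) hA
  calc infDistMeasure ν Γ γ (ball x r)
      ≤ ENNReal.ofReal (upperBallConst N A d C₀ γ * ballProfile N γ (infDist x Γ) r) :=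
        infDistMeasure_ball_le hν hμ hΓ hγ hγd x hr
    _ ≤ ENNReal.ofReal
          (upperBallConst N A d C₀ γ * ((r / s) ^ N * ballProfile N γ (infDist x Γ) s)) := by
        gcongr
        exact ballProfile_le_mul_ballProfile hγ hs hsr
    _ = ENNReal.ofReal (ratioConst N A d C₀ γ * (r / s) ^ N) *
          ENNReal.ofReal (A⁻¹ * 2 ^ (-γ) * ballProfile N γ (infDist x Γ) s) := by
        rw [← ENNReal.ofReal_mul (by positivity), ratioConst, Real.rpow_neg zero_le_two]
        congr 1
        field_simp
    _ ≤ ENNReal.ofReal (ratioConst N A d C₀ γ * (r / s) ^ N) *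
          infDistMeasure ν Γ γ (ball x s) := by
        gcongr
        exact le_infDistMeasure_ball hν hμ hΓ hγ (by linarith) x hs

lemma mul_infDistMeasure_ball_le (hν : IsAhlforsRegularOn_s2 ν N A univ)
    (hμ : IsAhlforsRegularOn_s2 μ d C₀ Γ) (hΓ : Γ.Nonempty) (hγ : 0 ≤ γ) (hγd : γ < N - d)
    (x : X) {r s : ℝ} (hs : 0 < s) (hsr : s ≤ r) :
    ENNReal.ofReal ((ratioConst N A d C₀ γ)⁻¹ * (r / s) ^ (N - γ)) *
        infDistMeasure ν Γ γ (ball x s) ≤ infDistMeasure ν Γ γ (ball x r) := by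
  have hr : 0 < r := hs.trans_le hsr
  have hA := hν.const_pos
  have hb := upperBallConst_pos (N := N) (d := d) (C₀ := C₀) (γ := γ) hA
  have hκ := ratioConst_pos (N := N) (d := d) (C₀ := C₀) (γ := γ) hA
  calc ENNReal.ofReal ((ratioConst N A d C₀ γ)⁻¹ * (r / s) ^ (N - γ)) *
        infDistMeasure ν Γ γ (ball x s)
      ≤ ENNReal.ofReal ((ratioConst N A d C₀ γ)⁻¹ * (r / s) ^ (N - γ)) *
          ENNReal.ofReal (upperBallConst N A d C₀ γ * ballProfile N γ (infDist x Γ) s) := by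
        gcongr
        exact infDistMeasure_ball_le hν hμ hΓ hγ hγd x hs
    _ = ENNReal.ofReal
          (A⁻¹ * 2 ^ (-γ) * ((r / s) ^ (N - γ) * ballProfile N γ (infDist x Γ) s)) := by
        rw [← ENNReal.ofReal_mul (by positivity), ratioConst, Real.rpow_neg zero_le_two]
        congr 1
        field_simp
    _ ≤ ENNReal.ofReal (A⁻¹ * 2 ^ (-γ) * ballProfile N γ (infDist x Γ) r) := by
        gcongr
        exact mul_ballProfile_le_ballProfile hγ hs hsr
    _ ≤ infDistMeasure ν Γ γ (ball x r) := le_infDistMeasure_ball hν hμ hΓ hγ (by linarith) x hr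

theorem statement2_general (N A d C₀ γ : ℝ) (hγ : 0 ≤ γ) (hγd : γ < N - d) :
    ∃ C : ℝ, 1 ≤ C ∧
      ∀ (X : Type u) [PseudoMetricSpace X] [MeasurableSpace X] [BorelSpace X]
        [SecondCountableTopology X] (ν μ : Measure X) (Γ : Set X), Γ.Nonempty →
        IsAhlforsRegularOn_s2 ν N A univ → IsAhlforsRegularOn_s2 μ d C₀ Γ →
        (∀ x : X, ∀ r s : ℝ, 0 < s → s < r →
          ENNReal.ofReal (C⁻¹ * (r / s) ^ (N - γ)) * infDistMeasure ν Γ γ (ball x s)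
              ≤ infDistMeasure ν Γ γ (ball x r) ∧
            infDistMeasure ν Γ γ (ball x r)
              ≤ ENNReal.ofReal (C * (r / s) ^ N) * infDistMeasure ν Γ γ (ball x s)) ∧
        ∀ x : X, ∀ r : ℝ, 0 < r →
          infDistMeasure ν Γ γ (ball x (2 * r)) ≤
            ENNReal.ofReal C * infDistMeasure ν Γ γ (ball x r) := by
  set κ := ratioConst N A d C₀ γ
  refine ⟨max 1 (max κ (κ * 2 ^ N)), le_max_left _ _, fun X _ _ _ _ ν μ Γ hΓ hν hμ =>
    ⟨fun x r s hs hsr => ⟨?_, ?_⟩, fun x r hr => ?_⟩⟩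
  · have hr : 0 < r := hs.trans hsr
    refine le_trans ?_ (mul_infDistMeasure_ball_le hν hμ hΓ hγ hγd x hs hsr.le)
    have hκ : 0 < κ := ratioConst_pos hν.const_pos
    gcongr
    exact (le_max_left _ _).trans (le_max_right _ _)
  · have hr : 0 < r := hs.trans hsr
    refine (infDistMeasure_ball_le_mul hν hμ hΓ hγ hγd x hs hsr.le).trans ?_
    gcongr
    exact (le_max_left _ _).trans (le_max_right _ _)
  · refine (infDistMeasure_ball_le_mul hν hμ hΓ hγ hγd x hr (by linarith)).trans ?_
    rw [mul_div_cancel_right₀ _ hr.ne']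
    gcongr
    exact (le_max_right _ _).trans (le_max_right _ _)

end MetricMeasure

lemma isAhlforsRegularOn_addHaar {E : Type*} [NormedAddCommGroup E] [NormedSpace ℝ E]
    [FiniteDimensional ℝ E] [MeasurableSpace E] [BorelSpace E] (ν : Measure E)
    [ν.IsAddHaarMeasure] :
    IsAhlforsRegularOn_s2 ν (Module.finrank ℝ E)
      (max (ν.real (ball 0 1)) (ν.real (ball 0 1))⁻¹) univ := by
  set V := ν.real (ball 0 1)
  have hV : 0 < V := ENNReal.toReal_pos (measure_ball_pos ν 0 one_pos).ne' measure_ball_lt_top.ne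
  have hball : ∀ (x : E) {r : ℝ}, 0 < r →
      ν (ball x r) = ENNReal.ofReal (V * r ^ (Module.finrank ℝ E : ℝ)) := by
    intro x r hr
    rw [Measure.addHaar_ball_of_pos ν x hr, mul_comm V, ENNReal.ofReal_mul (by positivity),
      ofReal_measureReal, Real.rpow_natCast]
  refine ⟨lt_max_of_lt_left hV, fun x _ r hr => ?_, fun x _ r hr => ?_⟩
  · rw [hball x hr]
    gcongr
    exact inv_le_of_inv_le₀ hV (le_max_right _ _)
  · rw [hball x hr]
    gcongr
    exact le_max_left _ _

lemma AhlforsRegular.isAhlforsRegularOn {n : ℕ} {d C₀ : ℝ} {Γ : Set (Euc n)}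
    (h : AhlforsRegular n d C₀ Γ) (hC₀ : 0 < C₀) :
    IsAhlforsRegularOn_s2 (μH[d].restrict Γ) d C₀ Γ where
  const_pos := hC₀
  le_measure_ball x hx r hr := by
    rw [Measure.restrict_apply measurableSet_ball, inter_comm]
    exact (h x hx r hr).1
  measure_ball_le x hx r hr := by
    rw [Measure.restrict_apply measurableSet_ball, inter_comm]
    exact (h x hx r hr).2

lemma measW_eq_infDistMeasure (n : ℕ) (d : ℝ) (Γ : Set (Euc n)) :
    measW n d Γ = infDistMeasure volume Γ (n - (d + 1)) := by
  simp only [measW, weightW, infDistMeasure, neg_sub]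

/-- two-sided doubling estimates for the weighted measure `m`;
in particular `m` is doubling. -/
theorem statement2 (n : ℕ) (hn : 2 ≤ n) (d C₀ : ℝ) (hd0 : 0 < d)
    (hdn : d < (n : ℝ) - 1) (hC₀ : 1 ≤ C₀) :
    ∃ C : ℝ, 1 ≤ C ∧
      ∀ Γ : Set (Euc n), Γ.Nonempty → IsClosed Γ → AhlforsRegular n d C₀ Γ →
        (∀ x : Euc n, ∀ r s : ℝ, 0 < s → s < r →
          ENNReal.ofReal (C⁻¹ * (r / s) ^ (d + 1)) * measW n d Γ (ball x s)
              ≤ measW n d Γ (ball x r) ∧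
            measW n d Γ (ball x r)
              ≤ ENNReal.ofReal (C * (r / s) ^ (n : ℝ)) * measW n d Γ (ball x s)) ∧
        ∀ x : Euc n, ∀ r : ℝ, 0 < r →
          measW n d Γ (ball x (2 * r)) ≤ ENNReal.ofReal C * measW n d Γ (ball x r) := by
  have hvol := isAhlforsRegularOn_addHaar (volume : Measure (Euc n))
  rw [finrank_euclideanSpace_fin] at hvol
  obtain ⟨C, hC, h⟩ := statement2_general n _ d C₀ (n - (d + 1)) (by linarith) (by linarith)
  refine ⟨C, hC, fun Γ hΓ _ hreg => ?_⟩
  simpa only [measW_eq_infDistMeasure, sub_sub_cancel] using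
    h (Euc n) volume _ Γ hΓ hvol (hreg.isAhlforsRegularOn (by linarith))
end
end

section
/- There exists ε > 0, depending only on n, d, and C₀, such that for every x₀ ∈ Γ and every r > 0 there exists a point A ∈ ℝⁿ with |A − x₀| ≤ r and dist(A, Γ) ≥ ε r. (Existence of corkscrew points.) -/
open MeasureTheory Metric Set Filter
open scoped ENNReal NNReal Topology

noncomputable section

/-!
Count pairs `(x, y)` with `x ∈ ball x₀ r`, `y ∈ Γ`, `dist x y < 2 ε r` in two ways. If every
point of `ball x₀ r` is within `ε r` of `Γ`, each `x` has at least `≈ (ε r) ^ d` partners, which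
gives `≳ r ^ s * (ε r) ^ d` pairs in an ambient space of dimension `s`. Each `y` has at most
`≈ (ε r) ^ s` partners, and the relevant part of `Γ` has mass `≲ r ^ d`, so there are
`≲ (ε r) ^ s * r ^ d` pairs. As `d < s`, this is impossible for small `ε`, uniformly in `r`.
-/

section DoubleCounting

variable {X : Type*} [PseudoMetricSpace X] [SecondCountableTopology X] [MeasurableSpace X]
  [OpensMeasurableSpace X]

theorem mul_measure_univ_le_of_measure_ball {ν μ : Measure X} [SFinite ν] [SFinite μ] {ρ : ℝ}
    {a b : ℝ≥0∞} (lower : ∀ᵐ x ∂ν, a ≤ μ (ball x ρ)) (upper : ∀ y, ν (ball y ρ) ≤ b) :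
    a * ν univ ≤ b * μ univ := by
  have measurableSet_close : MeasurableSet {p : X × X | dist p.2 p.1 < ρ} :=
    measurableSet_lt (measurable_snd.dist measurable_fst) measurable_const
  calc a * ν univ = ∫⁻ _, a ∂ν := (lintegral_const a).symm
    _ ≤ ∫⁻ x, μ (ball x ρ) ∂ν := lintegral_mono_ae lower
    _ = (ν.prod μ) {p | dist p.2 p.1 < ρ} := (Measure.prod_apply measurableSet_close).symm
    _ = ∫⁻ y, ν {x | dist y x < ρ} ∂μ := Measure.prod_apply_symm measurableSet_close
    _ = ∫⁻ y, ν (ball y ρ) ∂μ := by simp only [dist_comm, ball]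
    _ ≤ ∫⁻ _, b ∂μ := lintegral_mono upper
    _ = b * μ univ := lintegral_const b

end DoubleCounting

/-- `d`-Ahlfors regularity, with constant `C`, of a subset `Γ` of a metric space with respect to an
arbitrary measure `σ`. The predicate `AhlforsRegular` is the case `σ = μH[d]` in `ℝⁿ`; the case
`Γ = univ` expresses that the ambient space itself has dimension `d`. -/
def IsAhlforsRegular {X : Type*} [PseudoMetricSpace X] [MeasurableSpace X] (σ : Measure X)
    (d C : ℝ) (Γ : Set X) : Prop :=
  ∀ x ∈ Γ, ∀ r : ℝ, 0 < r →
    ENNReal.ofReal (C⁻¹ * r ^ d) ≤ σ (Γ ∩ ball x r) ∧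
      σ (Γ ∩ ball x r) ≤ ENNReal.ofReal (C * r ^ d)

namespace IsAhlforsRegular

section Metric

variable {X : Type*} [PseudoMetricSpace X] [MeasurableSpace X] {σ ν : Measure X}
  {d s C K δ r : ℝ} {Γ : Set X} {x x₀ : X}

theorem le_measure_ball (h : IsAhlforsRegular ν s K univ) (x : X) (hr : 0 < r) :
    ENNReal.ofReal (K⁻¹ * r ^ s) ≤ ν (ball x r) := by
  simpa using (h x (mem_univ x) r hr).1

theorem measure_ball_le (h : IsAhlforsRegular ν s K univ) (x : X) (hr : 0 < r) :
    ν (ball x r) ≤ ENNReal.ofReal (K * r ^ s) := by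
  simpa using (h x (mem_univ x) r hr).2

theorem le_measure_inter_ball_two_mul (h : IsAhlforsRegular σ d C Γ) (hΓ : Γ.Nonempty)
    (hx : infDist x Γ < δ) : ENNReal.ofReal (C⁻¹ * δ ^ d) ≤ σ (Γ ∩ ball x (2 * δ)) := by
  obtain ⟨z, hz, hxz⟩ := (infDist_lt_iff hΓ).1 hx
  refine (h z hz δ (dist_nonneg.trans_lt hxz)).1.trans (measure_mono ?_)
  gcongr
  exact ball_subset_ball' (by linarith [dist_comm x z])

variable [SecondCountableTopology X] [OpensMeasurableSpace X]

theorem mul_le_mul_of_forall_infDist_lt (hν : IsAhlforsRegular ν s K univ)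
    (hσ : IsAhlforsRegular σ d C Γ) (hK : 0 < K) (hC : 0 < C) (hx₀ : x₀ ∈ Γ) (hδ : 0 < δ)
    (hδr : δ ≤ r / 2) (dense : ∀ x ∈ ball x₀ r, infDist x Γ < δ) :
    C⁻¹ * δ ^ d * (K⁻¹ * r ^ s) ≤ K * (2 * δ) ^ s * (C * (2 * r) ^ d) := by
  have hr : 0 < r := by linarith
  let ν' := ν.restrict (ball x₀ r)
  let σ' := σ.restrict (Γ ∩ ball x₀ (2 * r))
  have ν'_lower : ENNReal.ofReal (K⁻¹ * r ^ s) ≤ ν' univ := by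
    simpa [ν'] using hν.le_measure_ball x₀ hr
  have ν'_finite : IsFiniteMeasure ν' :=
    ⟨by simpa [ν'] using (hν.measure_ball_le x₀ hr).trans_lt ENNReal.ofReal_lt_top⟩
  have σ'_upper : σ' univ ≤ ENNReal.ofReal (C * (2 * r) ^ d) := by
    simpa [σ'] using (hσ x₀ hx₀ (2 * r) (by positivity)).2
  have σ'_finite : IsFiniteMeasure σ' := ⟨σ'_upper.trans_lt ENNReal.ofReal_lt_top⟩
  have σ'_ball : ∀ᵐ x ∂ν', ENNReal.ofReal (C⁻¹ * δ ^ d) ≤ σ' (ball x (2 * δ)) := by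
    filter_upwards [ae_restrict_mem measurableSet_ball] with x hx
    refine (hσ.le_measure_inter_ball_two_mul ⟨x₀, hx₀⟩ (dense x hx)).trans ?_
    rw [Measure.restrict_apply measurableSet_ball]
    refine measure_mono fun y hy => ⟨hy.2, hy.1, ball_subset_ball' ?_ hy.2⟩
    linarith [mem_ball.1 hx]
  have ν'_ball (y : X) : ν' (ball y (2 * δ)) ≤ ENNReal.ofReal (K * (2 * δ) ^ s) :=
    (Measure.restrict_apply_le _ _).trans (hν.measure_ball_le y (by positivity))
  rw [← ENNReal.ofReal_le_ofReal_iff (by positivity),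
    ENNReal.ofReal_mul (p := C⁻¹ * δ ^ d) (by positivity),
    ENNReal.ofReal_mul (p := K * (2 * δ) ^ s) (by positivity)]
  calc _ ≤ ENNReal.ofReal (C⁻¹ * δ ^ d) * ν' univ := by gcongr
    _ ≤ ENNReal.ofReal (K * (2 * δ) ^ s) * σ' univ :=
      mul_measure_univ_le_of_measure_ball σ'_ball ν'_ball
    _ ≤ _ := by gcongr

end Metric

theorem exists_of_isAddHaarMeasure {E : Type*} [NormedAddCommGroup E] [NormedSpace ℝ E]
    [FiniteDimensional ℝ E] [MeasurableSpace E] [BorelSpace E] (μ : Measure E)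
    [μ.IsAddHaarMeasure] :
    ∃ K : ℝ, 0 < K ∧ IsAhlforsRegular μ (Module.finrank ℝ E) K univ := by
  set ω : ℝ := μ.real (ball 0 1)
  have hω : 0 < ω := ENNReal.toReal_pos (measure_ball_pos μ 0 one_pos).ne' measure_ball_lt_top.ne
  have measure_ball (x : E) {r : ℝ} (hr : 0 < r) :
      μ (ball x r) = ENNReal.ofReal (ω * r ^ Module.finrank ℝ E) := by
    rw [Measure.addHaar_ball_of_pos μ x hr, mul_comm, ENNReal.ofReal_mul hω.le,
      ofReal_measureReal]
  refine ⟨max ω ω⁻¹, lt_max_of_lt_left hω, fun x _ r hr => ?_⟩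
  rw [univ_inter, measure_ball x hr, Real.rpow_natCast]
  constructor <;> gcongr
  · exact inv_le_of_inv_le₀ hω (le_max_right _ _)
  · exact le_max_left _ _

end IsAhlforsRegular

theorem exists_pos_mul_rpow_lt_rpow {d s : ℝ} (hds : d < s) (M : ℝ) :
    ∃ ε : ℝ, 0 < ε ∧ ε ≤ 1 / 2 ∧ M * ε ^ s < ε ^ d := by
  have hsd : 0 < s - d := sub_pos.2 hds
  have tendsto_zero : Tendsto (fun ε : ℝ => M * ε ^ (s - d)) (𝓝[>] 0) (𝓝 0) := by
    have := ((Real.continuousAt_rpow_const 0 (s - d) (.inr hsd.le)).const_mul M).tendsto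
    simpa [Real.zero_rpow hsd.ne'] using this.mono_left nhdsWithin_le_nhds
  obtain ⟨ε, hε, hε_pos, hε_half⟩ := ((tendsto_zero.eventually_lt_const one_pos).and
    (Ioc_mem_nhdsGT (show (0 : ℝ) < 1 / 2 by norm_num))).exists
  refine ⟨ε, hε_pos, hε_half, ?_⟩
  rwa [Real.rpow_sub hε_pos, ← mul_div_assoc, div_lt_one (by positivity)] at hε

theorem exists_pos_forall_scale_lt {d s C K : ℝ} (hds : d < s) (hC : 0 < C) (hK : 0 < K) :
    ∃ ε : ℝ, 0 < ε ∧ ε ≤ 1 / 2 ∧ ∀ r : ℝ, 0 < r →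
      K * (2 * (ε * r)) ^ s * (C * (2 * r) ^ d) < C⁻¹ * (ε * r) ^ d * (K⁻¹ * r ^ s) := by
  obtain ⟨ε, hε, hε_half, hlt⟩ := exists_pos_mul_rpow_lt_rpow hds ((C * K) ^ 2 * 2 ^ s * 2 ^ d)
  refine ⟨ε, hε, hε_half, fun r hr => ?_⟩
  calc K * (2 * (ε * r)) ^ s * (C * (2 * r) ^ d)
      = (C * K)⁻¹ * (r ^ d * r ^ s) * ((C * K) ^ 2 * 2 ^ s * 2 ^ d * ε ^ s) := by
        rw [Real.mul_rpow two_pos.le (by positivity), Real.mul_rpow hε.le hr.le,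
          Real.mul_rpow two_pos.le hr.le]
        field_simp
    _ < (C * K)⁻¹ * (r ^ d * r ^ s) * ε ^ d := by gcongr
    _ = C⁻¹ * (ε * r) ^ d * (K⁻¹ * r ^ s) := by
        rw [Real.mul_rpow hε.le hr.le, mul_inv]
        ring

theorem statement3_general {X : Type*} [PseudoMetricSpace X] [SecondCountableTopology X]
    [MeasurableSpace X] [OpensMeasurableSpace X] {d s C K : ℝ} (hds : d < s) (hC : 0 < C)
    (hK : 0 < K) :
    ∃ ε : ℝ, 0 < ε ∧
      ∀ (ν σ : Measure X) (Γ : Set X), IsAhlforsRegular ν s K univ → IsAhlforsRegular σ d C Γ →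
        ∀ x₀ ∈ Γ, ∀ r : ℝ, 0 < r → ∃ A : X, dist A x₀ ≤ r ∧ ε * r ≤ infDist A Γ := by
  obtain ⟨ε, hε, hε_half, scale_lt⟩ := exists_pos_forall_scale_lt hds hC hK
  refine ⟨ε, hε, fun ν σ Γ hν hσ x₀ hx₀ r hr => ?_⟩
  by_contra! dense
  have hεr : ε * r ≤ r / 2 := by nlinarith
  exact (scale_lt r hr).not_ge <| hν.mul_le_mul_of_forall_infDist_lt hσ hK hC hx₀
    (by positivity) hεr fun x hx => dense x (mem_ball.1 hx).le

/-- existence of corkscrew points. -/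
theorem statement3 (n : ℕ) (hn : 2 ≤ n) (d C₀ : ℝ) (hd0 : 0 < d)
    (hdn : d < (n : ℝ) - 1) (hC₀ : 1 ≤ C₀) :
    ∃ ε : ℝ, 0 < ε ∧
      ∀ Γ : Set (Euc n), Γ.Nonempty → IsClosed Γ → AhlforsRegular n d C₀ Γ →
        ∀ x₀ ∈ Γ, ∀ r : ℝ, 0 < r →
          ∃ A : Euc n, dist A x₀ ≤ r ∧ ε * r ≤ infDist A Γ := by
  obtain ⟨K, hK, hvol⟩ := IsAhlforsRegular.exists_of_isAddHaarMeasure (volume : Measure (Euc n))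
  have hds : d < Module.finrank ℝ (Euc n) := by rw [finrank_euclideanSpace_fin]; linarith
  obtain ⟨ε, hε, corkscrew⟩ := statement3_general (X := Euc n) hds (one_pos.trans_le hC₀) hK
  exact ⟨ε, hε, fun Γ _ _ hΓ => corkscrew volume μH[d] Γ hvol hΓ⟩
end
end

section
/- Let u ∈ L¹_loc(Ω) possess a distributional gradient ∇u on Ω belonging to L²(Ω, m). Then u ∈ L¹_loc(ℝⁿ), and u has a distributional gradient on all of ℝⁿ: there exists v ∈ L¹_loc(ℝⁿ; ℝⁿ) with ∫_{ℝⁿ} v·φ dx = −∫_{ℝⁿ} u div φ dx for every φ ∈ C_c^∞(ℝⁿ; ℝⁿ), and v agrees a.e. on Ω with ∇u, so that v ∈ L²(ℝⁿ, m). Consequently W coincides with the set of u ∈ L¹_loc(ℝⁿ) whose distributional gradient on ℝⁿ lies in L²(ℝⁿ, m). -/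
open MeasureTheory Metric Set Filter
open scoped ENNReal NNReal Topology

noncomputable section

/-!
A set `Γ` with `H^{n-1}(Γ) = 0` has a Lebesgue-null projection along every direction, so for each
fixed `z` almost every segment `[x, x + z]` lies in the open set `Ω = Γᶜ`. Moving a test function
along such segments gives, for almost every `x`,
`u (x + z) - u x = ∫₀¹ z · v (x + s z) ds`,
where `v` is the gradient of `u` on `Ω`. It is locally integrable on all of `ℝⁿ`, because the
weight is bounded below on balls. Integrating this identity over a ball in `x` and `z` controls the
double integral of `|u (x + z) - u x|`, and Fubini's theorem yields `u ∈ L¹_loc(ℝⁿ)`. Replacing `z`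
by `t z`, pairing with a test function and differentiating at `t = 0` shows that `v` is the
distributional gradient of `u` on `ℝⁿ`. A `d`-Ahlfors regular set with `d < n - 1` is
`H^{n-1}`-null, since `H^d` is finite on its bounded pieces.
-/

section NullSets

lemma restrict_compl_eq_self_of_measure_eq_zero {X : Type*} [MeasurableSpace X] {μ : Measure X}
    {s : Set X} (hs : μ s = 0) : μ.restrict sᶜ = μ :=
  Measure.restrict_eq_self_of_ae_mem (s := sᶜ) (compl_mem_ae_iff.2 hs)

variable {E : Type*} [NormedAddCommGroup E] [MeasurableSpace E] [BorelSpace E]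

lemma addHaar_eq_zero_of_hausdorffMeasure_eq_zero [NormedSpace ℝ E] [FiniteDimensional ℝ E]
    (μ : Measure E) [μ.IsAddHaarMeasure] {s : ℝ} (hs : s ≤ Module.finrank ℝ E) {A : Set E}
    (hA : μH[s] A = 0) : μ A = 0 := by
  have hA' : μH[(Module.finrank ℝ E : ℝ)] A = 0 :=
    le_antisymm ((Measure.hausdorffMeasure_mono hs A).trans hA.le) zero_le
  rw [Measure.isAddLeftInvariant_eq_smul μ μH[(Module.finrank ℝ E : ℝ)], Measure.smul_apply, hA',
    smul_zero]

lemma addHaar_preimage_eq_zero_of_surjective {G : Type*} [NormedAddCommGroup G]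
    [NormedSpace ℝ E] [FiniteDimensional ℝ E] [NormedSpace ℝ G] [MeasurableSpace G] [BorelSpace G]
    (μ : Measure E) [μ.IsAddHaarMeasure] (ν : Measure G) [ν.IsAddHaarMeasure] {L : E →ₗ[ℝ] G}
    (hL : Function.Surjective L) {A : Set G} (hA : ν A = 0) : μ (L ⁻¹' A) = 0 := by
  obtain ⟨c, -, -, hmap⟩ := L.exists_map_addHaar_eq_smul_addHaar' μ ν hL
  refine Measure.preimage_null_of_map_null
    L.continuous_of_finiteDimensional.measurable.aemeasurable ?_
  rw [hmap, Measure.smul_apply, hA, smul_zero]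

variable [InnerProductSpace ℝ E] [FiniteDimensional ℝ E] (μ : Measure E) [μ.IsAddHaarMeasure]
  {Γ : Set E} {z : E}

lemma addHaar_setOf_exists_add_smul_mem_eq_zero (hz : z ≠ 0)
    (hΓ : μH[(Module.finrank ℝ E : ℝ) - 1] Γ = 0) : μ {x | ∃ t : ℝ, x + t • z ∈ Γ} = 0 := by
  set H : Submodule ℝ E := (ℝ ∙ z)ᗮ
  let P : E →L[ℝ] H := H.orthogonalProjectionOnto
  have hrank : (Module.finrank ℝ H : ℝ) = Module.finrank ℝ E - 1 := by
    rw [← Submodule.finrank_add_finrank_orthogonal (ℝ ∙ z), finrank_span_singleton hz]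
    push_cast
    ring
  have hPsurj : Function.Surjective (P : E →ₗ[ℝ] H) := fun y =>
    ⟨y, Submodule.orthogonalProjectionOnto_mem_subspace_eq_self y⟩
  have hPz : P z = 0 := Submodule.orthogonalProjectionOnto_eq_zero_iff.2
    (Submodule.le_orthogonal_orthogonal _ (Submodule.mem_span_singleton_self z))
  have hPΓ : μH[(Module.finrank ℝ H : ℝ)] (P '' Γ) = 0 := by
    refine le_antisymm ?_ zero_le
    calc μH[(Module.finrank ℝ H : ℝ)] (P '' Γ)
        ≤ μH[(Module.finrank ℝ H : ℝ)] Γ :=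
          hausdorffMeasure_orthogonalProjectionOnto_le H _ Γ (Nat.cast_nonneg _)
      _ = 0 := by rw [hrank, hΓ]
  refine measure_mono_null ?_ (addHaar_preimage_eq_zero_of_surjective μ _ hPsurj hPΓ)
  rintro x ⟨t, hxt⟩
  exact ⟨x + t • z, hxt, by simp [hPz]⟩

end NullSets

section SegmentInterior

variable {E : Type*} [NormedAddCommGroup E]

/-- The points `x` of `U` for which the whole segment from `x` to `x + z` lies in `U`. -/
def segmentInterior [NormedSpace ℝ E] (U : Set E) (z : E) : Set E :=
  {x | ∀ t ∈ Icc (0 : ℝ) 1, x + t • z ∈ U}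

lemma segmentInterior_subset [NormedSpace ℝ E] (U : Set E) (z : E) : segmentInterior U z ⊆ U :=
  fun x hx => by simpa using hx 0 (by simp)

lemma add_mem_of_mem_segmentInterior [NormedSpace ℝ E] {U : Set E} {x z : E}
    (hx : x ∈ segmentInterior U z) : x + z ∈ U := by
  simpa using hx 1 (by simp)

lemma isOpen_segmentInterior [NormedSpace ℝ E] {U : Set E} (hU : IsOpen U) (z : E) :
    IsOpen (segmentInterior U z) := by
  refine isOpen_iff_eventually.2 fun x hx =>
    isCompact_Icc.eventually_forall_of_forall_eventually fun t ht => ?_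
  have hcont : Continuous fun p : E × ℝ => p.1 + p.2 • z := by fun_prop
  exact hcont.continuousAt.eventually_mem (hU.mem_nhds (hx t ht))

lemma exists_isCompact_subset_segmentInterior [NormedSpace ℝ E] {K U : Set E} {z : E}
    (hK : IsCompact K) (hKU : K ⊆ segmentInterior U z) :
    ∃ S ⊆ U, IsCompact S ∧ K ⊆ segmentInterior S z := by
  refine ⟨(fun p : E × ℝ => p.1 + p.2 • z) '' (K ×ˢ Icc (0 : ℝ) 1), ?_,
    (hK.prod isCompact_Icc).image (by fun_prop), fun x hx t ht => ⟨(x, t), ⟨hx, ht⟩, rfl⟩⟩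
  rintro _ ⟨⟨x, t⟩, ⟨hx, ht⟩, rfl⟩
  exact hKU hx t ht

lemma ae_mem_segmentInterior_compl [InnerProductSpace ℝ E] [FiniteDimensional ℝ E]
    [MeasurableSpace E] [BorelSpace E] (μ : Measure E) [μ.IsAddHaarMeasure] {Γ : Set E}
    (hΓ : μH[(Module.finrank ℝ E : ℝ) - 1] Γ = 0) (z : E) :
    ∀ᵐ x ∂μ, x ∈ segmentInterior Γᶜ z := by
  rcases eq_or_ne z 0 with rfl | hz
  · refine measure_mono_null ?_
      (addHaar_eq_zero_of_hausdorffMeasure_eq_zero μ (sub_le_self _ zero_le_one) hΓ)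
    intro x hx
    by_contra hxΓ
    exact hx fun t _ => by simpa using hxΓ
  · refine measure_mono_null ?_ (addHaar_setOf_exists_add_smul_mem_eq_zero μ hz hΓ)
    intro x hx
    by_contra hxΓ
    exact hx fun t _ hxt => hxΓ ⟨t, hxt⟩

end SegmentInterior

section SegmentIntegral

variable {E F : Type*} [NormedAddCommGroup E] [MeasurableSpace E] [BorelSpace E]
  [NormedAddCommGroup F] {μ : Measure E}

lemma setLIntegral_ball_comp_add_le [μ.IsAddRightInvariant] (f : E → ℝ≥0∞) (a w : E) (R : ℝ) :
    ∫⁻ x in ball a R, f (x + w) ∂μ ≤ ∫⁻ x in ball a (R + ‖w‖), f x ∂μ := by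
  have hsub : ball a R ⊆ (· + w) ⁻¹' ball a (R + ‖w‖) := fun x hx => by
    rw [mem_preimage, mem_ball]
    calc dist (x + w) a ≤ dist (x + w) x + dist x a := dist_triangle _ _ _
      _ < R + ‖w‖ := by
        rw [dist_self_add_left]
        linarith [mem_ball.1 hx]
  calc ∫⁻ x in ball a R, f (x + w) ∂μ
      ≤ ∫⁻ x in (· + w) ⁻¹' ball a (R + ‖w‖), f (x + w) ∂μ := lintegral_mono_set hsub
    _ = ∫⁻ x in ball a (R + ‖w‖), f x ∂μ :=
      (measurePreserving_add_right μ w).setLIntegral_comp_preimage_emb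
        (measurableEmbedding_addRight w) f _

lemma integral_comp_sub_smul_eq [NormedSpace ℝ F] [μ.IsAddRightInvariant] (φ : E → ℝ) (f : E → F)
    (w : E) : ∫ x, φ (x - w) • f x ∂μ = ∫ x, φ x • f (x + w) ∂μ := by
  rw [← integral_add_right_eq_self _ w]
  simp only [add_sub_cancel_right]

lemma locallyIntegrableOn_comp_add_right [μ.IsAddRightInvariant] {f : E → F} {U V : Set E} {w : E}
    (hf : LocallyIntegrableOn f U μ) (hV : ∀ x ∈ V, x + w ∈ U) :
    LocallyIntegrableOn (fun x => f (x + w)) V μ := by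
  intro x hx
  obtain ⟨s, hs, hfs⟩ := hf (x + w) (hV x hx)
  have htendsto : Tendsto (· + w) (𝓝[V] x) (𝓝[U] (x + w)) :=
    (continuous_add_const w).continuousWithinAt.tendsto_nhdsWithin hV
  exact ⟨(· + w) ⁻¹' s, htendsto hs,
    ((measurePreserving_add_right μ w).integrableOn_comp_preimage
      (measurableEmbedding_addRight w)).2 hfs⟩

variable [NormedSpace ℝ E] [FiniteDimensional ℝ E] [μ.IsAddHaarMeasure]

lemma quasiMeasurePreserving_add_smul {ν : Measure E} [SFinite ν] (hν : ν ≪ μ) (τ : Measure ℝ)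
    [SFinite τ] (z : E) :
    Measure.QuasiMeasurePreserving (fun p : E × ℝ => p.1 + p.2 • z) (ν.prod τ) μ :=
  QuasiMeasurePreserving.prod_of_left (by fun_prop) (.of_forall fun t =>
    (measurePreserving_add_right μ (t • z)).quasiMeasurePreserving.mono_left hν)

lemma setLIntegral_ball_segment_le {f : E → ℝ≥0∞} (hf : AEMeasurable f μ) (a z : E) (R : ℝ) :
    ∫⁻ x in ball a R, (∫⁻ t in Ioc (0 : ℝ) 1, f (x + t • z)) ∂μ ≤
      ∫⁻ x in ball a (R + ‖z‖), f x ∂μ := by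
  have hmeas : AEMeasurable (fun p : E × ℝ => f (p.1 + p.2 • z))
      ((μ.restrict (ball a R)).prod (volume.restrict (Ioc 0 1))) :=
    hf.comp_quasiMeasurePreserving
      (quasiMeasurePreserving_add_smul Measure.restrict_le_self.absolutelyContinuous _ z)
  rw [lintegral_lintegral_swap hmeas]
  calc ∫⁻ t in Ioc (0 : ℝ) 1, ∫⁻ x in ball a R, f (x + t • z) ∂μ
      ≤ ∫⁻ _ in Ioc (0 : ℝ) 1, ∫⁻ x in ball a (R + ‖z‖), f x ∂μ := by
        refine setLIntegral_mono' measurableSet_Ioc fun t ht => ?_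
        refine (setLIntegral_ball_comp_add_le f a (t • z) R).trans (lintegral_mono_set ?_)
        gcongr
        rw [norm_smul, Real.norm_of_nonneg ht.1.le]
        exact mul_le_of_le_one_left (norm_nonneg z) ht.2
    _ = ∫⁻ x in ball a (R + ‖z‖), f x ∂μ := by simp

lemma integrable_comp_add_smul {g : E → F} (hg : LocallyIntegrable g μ) (a z : E) (R : ℝ) :
    Integrable (fun p : E × ℝ => g (p.1 + p.2 • z))
      ((μ.restrict (ball a R)).prod (volume.restrict (Ioc 0 1))) := by
  have hmeas : AEStronglyMeasurable (fun p : E × ℝ => g (p.1 + p.2 • z))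
      ((μ.restrict (ball a R)).prod (volume.restrict (Ioc 0 1))) :=
    hg.aestronglyMeasurable.comp_quasiMeasurePreserving
      (quasiMeasurePreserving_add_smul Measure.restrict_le_self.absolutelyContinuous _ z)
  refine ⟨hmeas, ?_⟩
  rw [hasFiniteIntegral_iff_enorm, lintegral_prod _ hmeas.enorm]
  refine (setLIntegral_ball_segment_le hg.aestronglyMeasurable.enorm a z R).trans_lt ?_
  exact ((hg.integrableOn_isCompact (isCompact_closedBall a _)).mono_set ball_subset_closedBall).2

variable [NormedSpace ℝ F]

/-- The integral of `g` over the segment from `x` to `x + z`, parametrized by `[0, 1]`. -/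
def segmentIntegral (g : E → F) (z x : E) : F :=
  ∫ s in (0 : ℝ)..1, g (x + s • z)

lemma locallyIntegrable_segmentIntegral {g : E → F} (hg : LocallyIntegrable g μ) (z : E) :
    LocallyIntegrable (segmentIntegral g z) μ := by
  intro a
  refine ⟨ball a 1, ball_mem_nhds a one_pos, ?_⟩
  unfold segmentIntegral
  simp_rw [intervalIntegral.integral_of_le zero_le_one]
  exact (integrable_comp_add_smul hg a z 1).integral_prod_left

lemma integral_smul_segmentIntegral {g : E → F} (hg : LocallyIntegrable g μ) {φ : E → ℝ}
    (hφ : Continuous φ) (hφc : HasCompactSupport φ) (z : E) :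
    ∫ x, φ x • segmentIntegral g z x ∂μ = ∫ s in (0 : ℝ)..1, ∫ x, φ (x - s • z) • g x ∂μ := by
  obtain ⟨R, hR⟩ := hφc.isBounded.subset_ball (0 : E)
  obtain ⟨M, hM⟩ := hφ.bounded_above_of_compact_support hφc
  have hint : Integrable (fun p : E × ℝ => φ p.1 • g (p.1 + p.2 • z))
      (μ.prod (volume.restrict (Ioc 0 1))) := by
    have hball : IntegrableOn (fun p : E × ℝ => φ p.1 • g (p.1 + p.2 • z)) (ball 0 R ×ˢ univ)
        (μ.prod (volume.restrict (Ioc 0 1))) := by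
      rw [IntegrableOn, ← Measure.prod_restrict, Measure.restrict_univ]
      exact (integrable_comp_add_smul hg 0 z R).bdd_smul M
        (hφ.comp continuous_fst).aestronglyMeasurable (.of_forall fun p => hM p.1)
    refine (integrableOn_iff_integrable_of_support_subset fun p hp => ?_).1 hball
    exact ⟨hR (subset_tsupport _ (left_ne_zero_of_smul hp)), mem_univ _⟩
  calc ∫ x, φ x • segmentIntegral g z x ∂μ
      = ∫ x, (∫ s in Ioc (0 : ℝ) 1, φ x • g (x + s • z)) ∂μ := by
        simp only [segmentIntegral, intervalIntegral.integral_of_le zero_le_one, integral_smul]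
    _ = ∫ s in Ioc (0 : ℝ) 1, ∫ x, φ x • g (x + s • z) ∂μ := integral_integral_swap hint
    _ = ∫ s in (0 : ℝ)..1, ∫ x, φ (x - s • z) • g x ∂μ := by
        simp only [integral_comp_sub_smul_eq, intervalIntegral.integral_of_le zero_le_one]

end SegmentIntegral

section CompactSupport

variable {X F : Type*} [TopologicalSpace X] [T2Space X] [MeasurableSpace X]
  [OpensMeasurableSpace X] [NormedAddCommGroup F] {μ : Measure X} {f : X → F} {K U : Set X}

lemma locallyIntegrable_indicator_of_isCompact (hf : LocallyIntegrableOn f U μ)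
    (hK : IsCompact K) (hKU : K ⊆ U) : LocallyIntegrable (K.indicator f) μ :=
  ((hf.integrableOn_compact_subset hKU hK).integrable_indicator
    hK.measurableSet).locallyIntegrable

lemma integrable_smul_of_tsupport_subset [NormedSpace ℝ F] (hf : LocallyIntegrableOn f U μ)
    {φ : X → ℝ} (hφ : Continuous φ) (hφc : HasCompactSupport φ) (hφU : tsupport φ ⊆ U) :
    Integrable (fun x => φ x • f x) μ := by
  have htrunc := locallyIntegrable_indicator_of_isCompact hf hφc hφU
  refine (htrunc.integrable_smul_left_of_hasCompactSupport hφ hφc).congr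
    (.of_forall fun x => ?_)
  by_cases hx : x ∈ tsupport φ
  · simp only [indicator_of_mem hx]
  · simp only [image_eq_zero_of_notMem_tsupport hx, zero_smul]

end CompactSupport

section WeakDirDeriv

variable {E F : Type*} [NormedAddCommGroup E] [NormedSpace ℝ E] [MeasurableSpace E]
  [NormedAddCommGroup F] [NormedSpace ℝ F]

/-- `g` is the derivative of `u` in the direction `z`, in the sense of distributions on the
open set `U`. -/
def IsWeakDirDerivOn (μ : Measure E) (u g : E → F) (z : E) (U : Set E) : Prop :=
  ∀ φ : E → ℝ, ContDiff ℝ (⊤ : ℕ∞) φ → HasCompactSupport φ → tsupport φ ⊆ U →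
    ∫ x, fderiv ℝ φ x z • u x ∂μ = -∫ x, φ x • g x ∂μ

variable {μ : Measure E} {u g : E → F} {z : E} {U S : Set E} {φ : E → ℝ}

lemma IsWeakDirDerivOn.indicator (h : IsWeakDirDerivOn μ u g z U) (hSU : S ⊆ U) :
    IsWeakDirDerivOn μ (S.indicator u) g z S := by
  intro φ hφ hφc hφS
  rw [← h φ hφ hφc (hφS.trans hSU)]
  congr 1 with x
  by_cases hx : x ∈ S
  · rw [indicator_of_mem hx]
  · rw [fderiv_of_notMem_tsupport ℝ (fun hxφ => hx (hφS hxφ))]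
    simp

variable [BorelSpace E] [FiniteDimensional ℝ E] [μ.IsAddHaarMeasure]

lemma hasDerivAt_integral_comp_sub_smul {f : E → F} (hf : LocallyIntegrable f μ)
    (hφ : ContDiff ℝ 1 φ) (hφc : HasCompactSupport φ) (z : E) (t : ℝ) :
    HasDerivAt (fun t : ℝ => ∫ x, φ (x - t • z) • f x ∂μ)
      (-∫ x, fderiv ℝ φ (x - t • z) z • f x ∂μ) t := by
  let ψ : E → ℝ := fun y => φ (-y)
  let L : F →L[ℝ] ℝ →L[ℝ] F := (ContinuousLinearMap.lsmul ℝ ℝ).flip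
  have hψ : ContDiff ℝ 1 ψ := hφ.comp contDiff_neg
  have hψc : HasCompactSupport ψ := hφc.comp_homeomorph (Homeomorph.neg E)
  have hderiv : HasDerivAt (fun t : ℝ => convolution f ψ L μ (t • z))
      (convolution f (fderiv ℝ ψ) (L.precompR E) μ (t • z) z) t := by
    have hline : HasDerivAt (fun t : ℝ => t • z) z t := by
      simpa using (hasDerivAt_id t).smul_const z
    exact (hψc.hasFDerivAt_convolution_right L hf hψ (t • z)).comp_hasDerivAt t hline
  have hfderiv : ∀ y, fderiv ℝ ψ y z = -fderiv ℝ φ (-y) z := fun y => by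
    have hφy := (hφ.differentiable one_ne_zero (-y)).hasFDerivAt
    have hψy : HasFDerivAt ψ _ y := hφy.comp y (hasFDerivAt_id y).neg
    simp [hψy.fderiv]
  convert hderiv using 1
  · ext t
    simp [convolution_def, L, ψ]
  · rw [convolution_precompR_apply L hf (hψc.fderiv ℝ) (hψ.continuous_fderiv one_ne_zero),
      convolution_def, ← integral_neg]
    simp [L, hfderiv]

lemma integral_comp_sub_smul_eq_add_intervalIntegral (hu : LocallyIntegrable u μ)
    (hg : LocallyIntegrable g μ) (hφ : Continuous φ) (hφc : HasCompactSupport φ) {t : ℝ}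
    (h : ∀ᵐ x ∂μ, u (x + t • z) - u x = t • segmentIntegral g (t • z) x) :
    ∫ x, φ (x - t • z) • u x ∂μ =
      ∫ x, φ x • u x ∂μ + ∫ s in (0 : ℝ)..t, ∫ x, φ (x - s • z) • g x ∂μ := by
  have hint {f : E → F} (hf : LocallyIntegrable f μ) :=
    hf.integrable_smul_left_of_hasCompactSupport hφ hφc
  have hseg : Integrable (fun x => t • φ x • segmentIntegral g (t • z) x) μ :=
    (hint (locallyIntegrable_segmentIntegral hg (t • z))).smul t
  calc ∫ x, φ (x - t • z) • u x ∂μ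
      = ∫ x, φ x • u (x + t • z) ∂μ := integral_comp_sub_smul_eq φ u _
    _ = ∫ x, φ x • u x + t • φ x • segmentIntegral g (t • z) x ∂μ := by
      refine integral_congr_ae ?_
      filter_upwards [h] with x hx
      rw [smul_comm, ← hx, smul_sub, add_sub_cancel]
    _ = ∫ x, φ x • u x ∂μ + t • ∫ s in (0 : ℝ)..1, ∫ x, φ (x - (s * t) • z) • g x ∂μ := by
      rw [integral_add (hint hu) hseg, integral_smul, integral_smul_segmentIntegral hg hφ hφc]
      simp only [smul_smul]
    _ = ∫ x, φ x • u x ∂μ + ∫ s in (0 : ℝ)..t, ∫ x, φ (x - s • z) • g x ∂μ := by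
      rw [intervalIntegral.smul_integral_comp_mul_right (a := 0) (b := 1)
        (fun s => ∫ x, φ (x - s • z) • g x ∂μ) t, zero_mul, one_mul]

variable [CompleteSpace F]

lemma IsWeakDirDerivOn.integral_smul_comp_add_sub_of_locallyIntegrable
    (h : IsWeakDirDerivOn μ u g z U) (hu : LocallyIntegrable u μ) (hg : LocallyIntegrable g μ)
    (hφ : ContDiff ℝ (⊤ : ℕ∞) φ) (hφc : HasCompactSupport φ)
    (hφU : tsupport φ ⊆ segmentInterior U z) :
    ∫ x, φ x • u (x + z) ∂μ - ∫ x, φ x • u x ∂μ = ∫ x, φ x • segmentIntegral g z x ∂μ := by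
  have hφ1 : ContDiff ℝ 1 φ := hφ.of_le (by exact_mod_cast le_top)
  have htranslate : ∀ s ∈ Icc (0 : ℝ) 1,
      -∫ x, fderiv ℝ φ (x - s • z) z • u x ∂μ = ∫ x, φ (x - s • z) • g x ∂μ := by
    intro s hs
    have hsupp : tsupport (fun x => φ (x - s • z)) ⊆ U := by
      intro x hx
      replace hx : x - s • z ∈ tsupport φ :=
        (tsupport_comp_eq_preimage φ (Homeomorph.subRight (s • z))).subset hx
      simpa using hφU hx s hs
    have hweak := h (fun x => φ (x - s • z)) (hφ.comp (contDiff_id.sub contDiff_const))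
      (hφc.comp_homeomorph (Homeomorph.subRight (s • z))) hsupp
    simp only [fderiv_comp_sub] at hweak
    rw [hweak, neg_neg]
  have hcont : Continuous fun s : ℝ => ∫ x, φ (x - s • z) • g x ∂μ :=
    continuous_iff_continuousAt.2 fun s =>
      (hasDerivAt_integral_comp_sub_smul hg hφ1 hφc z s).continuousAt
  have hftc := intervalIntegral.integral_eq_sub_of_hasDerivAt (a := 0) (b := 1)
    (f := fun s : ℝ => ∫ x, φ (x - s • z) • u x ∂μ)
    (fun s hs => htranslate s (uIcc_of_le (zero_le_one' ℝ) ▸ hs) ▸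
      hasDerivAt_integral_comp_sub_smul hu hφ1 hφc z s)
    (hcont.intervalIntegrable 0 1)
  rw [integral_smul_segmentIntegral hg hφ.continuous hφc, hftc]
  simp only [integral_comp_sub_smul_eq, one_smul, zero_smul, add_zero]

-- `u` need not be locally integrable on `E`; truncate it to the compact set swept out by `φ`.
lemma IsWeakDirDerivOn.integral_smul_comp_add_sub (h : IsWeakDirDerivOn μ u g z U)
    (hu : LocallyIntegrableOn u U μ) (hg : LocallyIntegrable g μ) (hφ : ContDiff ℝ (⊤ : ℕ∞) φ)
    (hφc : HasCompactSupport φ) (hφU : tsupport φ ⊆ segmentInterior U z) :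
    ∫ x, φ x • u (x + z) ∂μ - ∫ x, φ x • u x ∂μ = ∫ x, φ x • segmentIntegral g z x ∂μ := by
  obtain ⟨S, hSU, hS, hφS⟩ := exists_isCompact_subset_segmentInterior hφc hφU
  have htrunc : ∀ w : E, (∀ x ∈ tsupport φ, x + w ∈ S) →
      ∀ x, φ x • S.indicator u (x + w) = φ x • u (x + w) := by
    intro w hw x
    by_cases hx : x ∈ tsupport φ
    · rw [indicator_of_mem (hw x hx)]
    · rw [image_eq_zero_of_notMem_tsupport hx, zero_smul, zero_smul]
  have htrunc₀ : ∀ x, φ x • S.indicator u x = φ x • u x := by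
    simpa using htrunc 0 fun x hx => by simpa using segmentInterior_subset S z (hφS hx)
  have htrunc₁ := htrunc z fun x hx => add_mem_of_mem_segmentInterior (hφS hx)
  simpa only [htrunc₀, htrunc₁] using
    (h.indicator hSU).integral_smul_comp_add_sub_of_locallyIntegrable
      (locallyIntegrable_indicator_of_isCompact hu hS hSU) hg hφ hφc hφS

lemma IsWeakDirDerivOn.ae_sub_eq_segmentIntegral (h : IsWeakDirDerivOn μ u g z U)
    (hU : IsOpen U) (hu : LocallyIntegrableOn u U μ) (hg : LocallyIntegrable g μ) :
    ∀ᵐ x ∂μ, x ∈ segmentInterior U z → u (x + z) - u x = segmentIntegral g z x := by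
  have hu₀ := hu.mono_set (segmentInterior_subset U z)
  have hu₁ : LocallyIntegrableOn (fun x => u (x + z)) (segmentInterior U z) μ :=
    locallyIntegrableOn_comp_add_right hu fun _ => add_mem_of_mem_segmentInterior
  have hseg := (locallyIntegrable_segmentIntegral hg z).locallyIntegrableOn (segmentInterior U z)
  have hzero := (isOpen_segmentInterior hU z).ae_eq_zero_of_integral_contDiff_smul_eq_zero
    ((hu₁.sub hu₀).sub hseg) ?_
  · filter_upwards [hzero] with x hx hxU
    exact sub_eq_zero.1 (hx hxU)
  intro φ hφ hφc hφU
  have hint {f : E → F} (hf : LocallyIntegrableOn f (segmentInterior U z) μ) :=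
    integrable_smul_of_tsupport_subset hf hφ.continuous hφc hφU
  have hincr : Integrable (fun x => φ x • u (x + z) - φ x • u x) μ := (hint hu₁).sub (hint hu₀)
  simp only [Pi.sub_apply, smul_sub]
  rw [integral_sub hincr (hint hseg), integral_sub (hint hu₁) (hint hu₀),
    h.integral_smul_comp_add_sub hu hg hφ hφc hφU, sub_self]

lemma isWeakDirDerivOn_univ_of_ae_sub_eq (hu : LocallyIntegrable u μ) (hg : LocallyIntegrable g μ)
    (h : ∀ t : ℝ, ∀ᵐ x ∂μ, u (x + t • z) - u x = t • segmentIntegral g (t • z) x) :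
    IsWeakDirDerivOn μ u g z univ := by
  intro φ hφ hφc _
  have hφ1 : ContDiff ℝ 1 φ := hφ.of_le (by exact_mod_cast le_top)
  have hcont : Continuous fun s : ℝ => ∫ x, φ (x - s • z) • g x ∂μ :=
    continuous_iff_continuousAt.2 fun s =>
      (hasDerivAt_integral_comp_sub_smul hg hφ1 hφc z s).continuousAt
  have hderiv_test := hasDerivAt_integral_comp_sub_smul hu hφ1 hφc z 0
  have hderiv_incr : HasDerivAt (fun t : ℝ => ∫ x, φ (x - t • z) • u x ∂μ)
      (∫ x, φ (x - (0 : ℝ) • z) • g x ∂μ) 0 :=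
    ((hcont.integral_hasStrictDerivAt 0 0).hasDerivAt.const_add _).congr_of_eventuallyEq
      (.of_forall fun t =>
        integral_comp_sub_smul_eq_add_intervalIntegral hu hg hφ.continuous hφc (h t))
  rw [← neg_eq_iff_eq_neg]
  simpa only [zero_smul, sub_zero] using hderiv_test.unique hderiv_incr

end WeakDirDeriv

section LocalIntegrability

variable {E F : Type*} [NormedAddCommGroup E] [NormedSpace ℝ E] [FiniteDimensional ℝ E]
  [MeasurableSpace E] [BorelSpace E] [NormedAddCommGroup F] {μ : Measure E} [μ.IsAddHaarMeasure]
  {u : E → F} {a : E} {r : ℝ}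

lemma aestronglyMeasurable_comp_add_sub (hu : AEStronglyMeasurable u μ) (ν ρ : Measure E)
    [SFinite ν] [SFinite ρ] (hρ : ρ ≪ μ) :
    AEStronglyMeasurable (fun p : E × E => u (p.2 + p.1) - u p.2) (ν.prod ρ) := by
  have hadd : Measure.QuasiMeasurePreserving (fun p : E × E => p.2 + p.1) (ν.prod ρ) μ :=
    QuasiMeasurePreserving.prod_of_right (by fun_prop) (.of_forall fun z =>
      (measurePreserving_add_right μ z).quasiMeasurePreserving.mono_left hρ)
  exact (hu.comp_quasiMeasurePreserving hadd).sub (hu.mono_ac hρ).comp_snd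

-- By Fubini some `x` in the ball satisfies `∫ ‖u (x + z) - u x‖ₑ dz < ∞` over `ball 0 (2 * r)`,
-- and the translate `x + ball 0 (2 * r)` covers `ball a r`.
lemma integrableOn_ball_of_lintegral_enorm_sub_lt_top (hr : 0 < r)
    (hu : AEStronglyMeasurable u μ)
    (h : ∫⁻ z in ball 0 (2 * r), ∫⁻ x in ball a r, ‖u (x + z) - u x‖ₑ ∂μ ∂μ < ⊤) :
    IntegrableOn u (ball a r) μ := by
  have hmeas : AEMeasurable (fun p : E × E => ‖u (p.2 + p.1) - u p.2‖ₑ)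
      ((μ.restrict (ball 0 (2 * r))).prod (μ.restrict (ball a r))) :=
    (aestronglyMeasurable_comp_add_sub hu _ _ Measure.restrict_le_self.absolutelyContinuous).enorm
  rw [lintegral_lintegral_swap hmeas] at h
  have hpos : (ae (μ.restrict (ball a r))).NeBot := by
    rw [ae_restrict_neBot]
    exact (measure_ball_pos μ a hr).ne'
  obtain ⟨x, hx, hxa⟩ := ((ae_lt_top' hmeas.prod_swap.lintegral_prod_right' h.ne).and
    (ae_restrict_mem measurableSet_ball)).exists
  have hcover : ball a r ⊆ (-x + ·) ⁻¹' ball 0 (2 * r) := fun y hy => by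
    rw [mem_preimage, mem_ball_zero_iff, neg_add_eq_sub, ← dist_eq_norm]
    linarith [dist_triangle_right y x a, mem_ball.1 hy, mem_ball.1 hxa]
  have hdiff : IntegrableOn (fun y => u y - u x) (ball a r) μ := by
    refine ⟨(hu.sub aestronglyMeasurable_const).restrict, ?_⟩
    calc ∫⁻ y in ball a r, ‖u y - u x‖ₑ ∂μ
        ≤ ∫⁻ y in (-x + ·) ⁻¹' ball 0 (2 * r), ‖u (x + (-x + y)) - u x‖ₑ ∂μ := by
          simpa only [add_neg_cancel_left] using lintegral_mono_set hcover
      _ = ∫⁻ z in ball 0 (2 * r), ‖u (x + z) - u x‖ₑ ∂μ :=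
          (measurePreserving_add_left μ (-x)).setLIntegral_comp_preimage_emb
            (measurableEmbedding_addLeft (-x)) (fun z => ‖u (x + z) - u x‖ₑ) _
      _ < ⊤ := hx
  have hsum : IntegrableOn (fun y => u y - u x + u x) (ball a r) μ :=
    hdiff.add (integrableOn_const measure_ball_lt_top.ne)
  simpa only [sub_add_cancel] using hsum

variable [NormedSpace ℝ F] {v : E → E →L[ℝ] F}

lemma setLIntegral_ball_enorm_comp_add_sub_le (hv : AEStronglyMeasurable v μ) {z : E}
    (h : ∀ᵐ x ∂μ, u (x + z) - u x = segmentIntegral (fun y => v y z) z x) (a : E) (R : ℝ) :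
    ∫⁻ x in ball a R, ‖u (x + z) - u x‖ₑ ∂μ ≤
      ∫⁻ x in ball a (R + ‖z‖), ‖v x‖ₑ * ‖z‖ₑ ∂μ := by
  have hvz : AEStronglyMeasurable (fun y => v y z) μ := hv.apply_continuousLinearMap z
  calc ∫⁻ x in ball a R, ‖u (x + z) - u x‖ₑ ∂μ
      ≤ ∫⁻ x in ball a R, (∫⁻ t in Ioc (0 : ℝ) 1, ‖v (x + t • z) z‖ₑ) ∂μ := by
        refine lintegral_mono_ae ?_
        filter_upwards [ae_restrict_of_ae h] with x hx
        rw [hx, segmentIntegral, intervalIntegral.integral_of_le zero_le_one]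
        exact enorm_integral_le_lintegral_enorm _
    _ ≤ ∫⁻ x in ball a (R + ‖z‖), ‖v x z‖ₑ ∂μ := setLIntegral_ball_segment_le hvz.enorm a z R
    _ ≤ ∫⁻ x in ball a (R + ‖z‖), ‖v x‖ₑ * ‖z‖ₑ ∂μ :=
        lintegral_mono fun x => (v x).le_opENorm z

lemma locallyIntegrable_of_ae_sub_eq_segmentIntegral (hu : AEStronglyMeasurable u μ)
    (hv : LocallyIntegrable v μ)
    (h : ∀ z, ∀ᵐ x ∂μ, u (x + z) - u x = segmentIntegral (fun y => v y z) z x) :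
    LocallyIntegrable u μ := by
  intro a
  refine ⟨ball a 1, ball_mem_nhds a one_pos,
    integrableOn_ball_of_lintegral_enorm_sub_lt_top one_pos hu ?_⟩
  have hfin : ∫⁻ x in ball a 3, ‖v x‖ₑ ∂μ < ⊤ :=
    ((hv.integrableOn_isCompact (isCompact_closedBall a 3)).mono_set ball_subset_closedBall).2
  calc ∫⁻ z in ball 0 (2 * 1), ∫⁻ x in ball a 1, ‖u (x + z) - u x‖ₑ ∂μ ∂μ
      ≤ ∫⁻ _ in ball 0 (2 * 1), (∫⁻ x in ball a 3, ‖v x‖ₑ ∂μ) * 2 ∂μ := by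
        refine setLIntegral_mono' measurableSet_ball fun z hz => ?_
        have hz : ‖z‖ ≤ 2 := by linarith [mem_ball_zero_iff.1 hz]
        refine (setLIntegral_ball_enorm_comp_add_sub_le hv.aestronglyMeasurable (h z) a 1).trans ?_
        rw [← lintegral_mul_const' _ _ (by simp)]
        refine lintegral_mono' (Measure.restrict_mono (ball_subset_ball (by linarith)) le_rfl)
          fun x => ?_
        gcongr
        rw [← ofReal_norm]
        exact ENNReal.ofReal_le_of_le_toReal (by simpa using hz)
    _ < ⊤ := by
        rw [setLIntegral_const]
        exact ENNReal.mul_lt_top (ENNReal.mul_lt_top hfin (by simp)) measure_ball_lt_top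

end LocalIntegrability

section Removability

variable {E F : Type*} [NormedAddCommGroup E] [InnerProductSpace ℝ E] [FiniteDimensional ℝ E]
  [MeasurableSpace E] [BorelSpace E] [NormedAddCommGroup F] [NormedSpace ℝ F] [CompleteSpace F]
  {μ : Measure E} [μ.IsAddHaarMeasure] {Γ : Set E} {u : E → F} {v : E → E →L[ℝ] F}

lemma ae_sub_eq_segmentIntegral_of_isWeakDirDerivOn_compl (hΓ : IsClosed Γ)
    (hΓ₀ : μH[(Module.finrank ℝ E : ℝ) - 1] Γ = 0) (hu : LocallyIntegrableOn u Γᶜ μ)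
    {g : E → F} (hg : LocallyIntegrable g μ) {z : E} (h : IsWeakDirDerivOn μ u g z Γᶜ) :
    ∀ᵐ x ∂μ, u (x + z) - u x = segmentIntegral g z x := by
  filter_upwards [h.ae_sub_eq_segmentIntegral hΓ.isOpen_compl hu hg,
    ae_mem_segmentInterior_compl μ hΓ₀ z] with x hx hxz using hx hxz

theorem isWeakDirDerivOn_univ_of_compl (hΓ : IsClosed Γ)
    (hΓ₀ : μH[(Module.finrank ℝ E : ℝ) - 1] Γ = 0) (hu : LocallyIntegrableOn u Γᶜ μ)
    (hv : LocallyIntegrable v μ) (h : ∀ z, IsWeakDirDerivOn μ u (fun x => v x z) z Γᶜ) :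
    LocallyIntegrable u μ ∧ ∀ z, IsWeakDirDerivOn μ u (fun x => v x z) z univ := by
  have hvz : ∀ z, LocallyIntegrable (fun x => v x z) μ := fun z a =>
    (hv a).imp fun _ hs => ⟨hs.1, hs.2.apply_continuousLinearMap z⟩
  have hincr : ∀ z, ∀ᵐ x ∂μ, u (x + z) - u x = segmentIntegral (fun y => v y z) z x := fun z =>
    ae_sub_eq_segmentIntegral_of_isWeakDirDerivOn_compl hΓ hΓ₀ hu (hvz z) (h z)
  have hmeas : AEStronglyMeasurable u μ := by
    have hnull : μ Γ = 0 :=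
      addHaar_eq_zero_of_hausdorffMeasure_eq_zero μ (sub_le_self _ zero_le_one) hΓ₀
    simpa only [restrict_compl_eq_self_of_measure_eq_zero hnull] using hu.aestronglyMeasurable
  have hloc := locallyIntegrable_of_ae_sub_eq_segmentIntegral hmeas hv hincr
  refine ⟨hloc, fun z => isWeakDirDerivOn_univ_of_ae_sub_eq hloc (hvz z) fun t => ?_⟩
  filter_upwards [hincr (t • z)] with x hx
  rw [hx]
  simp only [segmentIntegral, map_smul, intervalIntegral.integral_smul]

end Removability

section Gradient

variable {E : Type*} [NormedAddCommGroup E] [InnerProductSpace ℝ E] [CompleteSpace E] {φ : E → ℝ}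

lemma gradient_eq_zero_of_notMem_tsupport {x : E} (hx : x ∉ tsupport φ) : gradient φ x = 0 := by
  rw [gradient, fderiv_of_notMem_tsupport ℝ hx, map_zero]

lemma integrable_smul_gradient_of_tsupport_subset [SecondCountableTopology E]
    [MeasurableSpace E] [BorelSpace E] {μ : Measure E} {u : E → ℝ} {U : Set E}
    (hu : LocallyIntegrableOn u U μ) (hφ : ContDiff ℝ 1 φ) (hφc : HasCompactSupport φ)
    (hφU : tsupport φ ⊆ U) :
    Integrable (fun x => u x • gradient φ x) μ := by
  have hcont : Continuous (gradient φ) :=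
    (InnerProductSpace.toDual ℝ E).symm.continuous.comp (hφ.continuous_fderiv one_ne_zero)
  refine (integrableOn_iff_integrable_of_support_subset fun x hx => ?_).1
    ((hu.integrableOn_compact_subset hφU hφc).smul_continuousOn hcont.continuousOn hφc)
  by_contra hxφ
  exact hx (by simp only [gradient_eq_zero_of_notMem_tsupport hxφ, smul_zero])

variable {n : ℕ} {Γ U : Set (Euc n)} {u : Euc n → ℝ} {v : Euc n → Euc n}

lemma isDistribGradOn_iff_forall_isWeakDirDerivOn (hu : LocallyIntegrableOn u U volume)
    (hv : LocallyIntegrableOn v U volume) :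
    IsDistribGradOn u v U ↔ ∀ z, IsWeakDirDerivOn volume u (fun x => innerSL ℝ (v x) z) z U := by
  suffices hφ : ∀ φ : Euc n → ℝ, ContDiff ℝ (⊤ : ℕ∞) φ → HasCompactSupport φ → tsupport φ ⊆ U →
      (∫ x in U, u x • gradient φ x = -∫ x in U, φ x • v x ↔
        ∀ z, ∫ x, fderiv ℝ φ x z • u x = -∫ x, φ x • innerSL ℝ (v x) z) from
    ⟨fun h z φ h₁ h₂ h₃ => (hφ φ h₁ h₂ h₃).1 (h φ h₁ h₂ h₃) z,
      fun h φ h₁ h₂ h₃ => (hφ φ h₁ h₂ h₃).2 fun z => h z φ h₁ h₂ h₃⟩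
  intro φ hφ hφc hφU
  have hintu := integrable_smul_gradient_of_tsupport_subset hu
    (hφ.of_le (by exact_mod_cast le_top)) hφc hφU
  have hintv := integrable_smul_of_tsupport_subset hv hφ.continuous hφc hφU
  have hpair_u : ∀ z, ∫ x, fderiv ℝ φ x z • u x = inner ℝ z (∫ x, u x • gradient φ x) := fun z => by
    rw [← integral_inner hintu]
    simp [inner_smul_right, inner_gradient_right, mul_comm]
  have hpair_v : ∀ z, ∫ x, φ x • innerSL ℝ (v x) z = inner ℝ z (∫ x, φ x • v x) := fun z => by
    rw [← integral_inner hintv]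
    simp [inner_smul_right, real_inner_comm]
  rw [setIntegral_eq_integral_of_forall_compl_eq_zero fun x hx => by
      rw [gradient_eq_zero_of_notMem_tsupport fun hxφ => hx (hφU hxφ), smul_zero],
    setIntegral_eq_integral_of_forall_compl_eq_zero fun x hx => by
      rw [image_eq_zero_of_notMem_tsupport fun hxφ => hx (hφU hxφ), zero_smul]]
  simp only [hpair_u, hpair_v, ← inner_neg_right]
  exact ⟨fun h z => by rw [h], ext_inner_left ℝ⟩

theorem isDistribGradOn_univ_of_compl (hΓ : IsClosed Γ) (hΓ₀ : μH[(n : ℝ) - 1] Γ = 0)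
    (hu : LocallyIntegrableOn u Γᶜ volume) (hv : LocallyIntegrable v volume)
    (h : IsDistribGradOn u v Γᶜ) : LocallyIntegrable u volume ∧ IsDistribGradOn u v univ := by
  have hdual : LocallyIntegrable (fun x => innerSL ℝ (v x)) volume := fun a =>
    (hv a).imp fun _ hs => ⟨hs.1, (innerSL ℝ).integrable_comp hs.2⟩
  obtain ⟨hloc, hweak⟩ := isWeakDirDerivOn_univ_of_compl hΓ (by rwa [finrank_euclideanSpace_fin])
    hu hdual ((isDistribGradOn_iff_forall_isWeakDirDerivOn hu (hv.locallyIntegrableOn _)).1 h)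
  exact ⟨hloc, (isDistribGradOn_iff_forall_isWeakDirDerivOn (hloc.locallyIntegrableOn _)
    (hv.locallyIntegrableOn _)).2 hweak⟩

end Gradient

section Weight

lemma integrableOn_of_lintegral_sq_withDensity_lt_top {X F : Type*} [MeasurableSpace X]
    [NormedAddCommGroup F] {μ : Measure X} {w : X → ℝ≥0∞} {c : ℝ≥0∞} {s : Set X} {f : X → F}
    (hs : MeasurableSet s) (hμs : μ s ≠ ⊤) (hc : c ≠ 0) (hw : ∀ᵐ x ∂μ.restrict s, c ≤ w x)
    (hf : AEStronglyMeasurable f (μ.restrict s))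
    (h : ∫⁻ x in s, ‖f x‖ₑ ^ 2 ∂(μ.withDensity w) < ⊤) : IntegrableOn f s μ := by
  have hle : c • μ.restrict s ≤ (μ.withDensity w).restrict s := by
    rw [restrict_withDensity hs, ← withDensity_const]
    exact withDensity_mono hw
  have hsq : c * ∫⁻ x in s, ‖f x‖ₑ ^ 2 ∂μ < ⊤ := by
    rw [← smul_eq_mul, ← lintegral_smul_measure]
    exact (lintegral_mono' hle le_rfl).trans_lt h
  have hfinite : IsFiniteMeasure (μ.restrict s) := isFiniteMeasure_restrict.2 hμs
  have hL2 : MemLp f 2 (μ.restrict s) := by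
    refine ⟨hf, ?_⟩
    rw [eLpNorm_lt_top_iff_lintegral_rpow_enorm_lt_top two_ne_zero ENNReal.ofNat_ne_top]
    simpa using ENNReal.lt_top_of_mul_ne_top_right hsq.ne hc
  exact hL2.integrable one_le_two

variable {n : ℕ} {d : ℝ} {Γ : Set (Euc n)}

lemma rpow_le_weightW (hd : d ≤ (n : ℝ) - 1) (hΓ : IsClosed Γ) {a b x : Euc n} {R : ℝ}
    (hb : b ∈ Γ) (hx : x ∈ ball a R) (hxΓ : x ∉ Γ) :
    (R + dist a b) ^ (d + 1 - (n : ℝ)) ≤ weightW n d Γ x := by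
  refine Real.rpow_le_rpow_of_nonpos ((hΓ.notMem_iff_infDist_pos ⟨b, hb⟩).1 hxΓ) ?_ (by linarith)
  calc infDist x Γ ≤ dist x b := infDist_le_dist_of_mem hb
    _ ≤ dist x a + dist a b := dist_triangle _ _ _
    _ ≤ R + dist a b := by linarith [mem_ball.1 hx]

lemma locallyIntegrable_of_lintegral_sq_measW_lt_top (hd : d ≤ (n : ℝ) - 1) (hne : Γ.Nonempty)
    (hΓ : IsClosed Γ) (hΓ₀ : volume Γ = 0) {F : Type*} [NormedAddCommGroup F] {f : Euc n → F}
    (hf : AEStronglyMeasurable f volume)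
    (hL2 : ∫⁻ x, ENNReal.ofReal (‖f x‖ ^ 2) ∂(measW n d Γ) < ⊤) : LocallyIntegrable f volume := by
  obtain ⟨b, hb⟩ := hne
  intro a
  have hc : 0 < (1 + dist a b) ^ (d + 1 - (n : ℝ)) := by positivity
  have hw : ∀ᵐ x ∂volume.restrict (ball a 1), ENNReal.ofReal ((1 + dist a b) ^ (d + 1 - (n : ℝ))) ≤
      ENNReal.ofReal (weightW n d Γ x) := by
    filter_upwards [ae_restrict_mem measurableSet_ball,
      ae_restrict_of_ae (compl_mem_ae_iff.2 hΓ₀)] with x hx hxΓ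
    exact ENNReal.ofReal_le_ofReal (rpow_le_weightW hd hΓ hb hx hxΓ)
  refine ⟨ball a 1, ball_mem_nhds a one_pos, integrableOn_of_lintegral_sq_withDensity_lt_top
    measurableSet_ball measure_ball_lt_top.ne (ENNReal.ofReal_pos.2 hc).ne' hw hf.restrict ?_⟩
  simp only [ENNReal.ofReal_pow (norm_nonneg _), ofReal_norm] at hL2
  exact (setLIntegral_le_lintegral _ _).trans_lt hL2

lemma AhlforsRegular.hausdorffMeasure_eq_zero {C₀ s : ℝ} (h : AhlforsRegular n d C₀ Γ)
    (hds : d < s) : μH[s] Γ = 0 := by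
  rcases Γ.eq_empty_or_nonempty with rfl | ⟨a, ha⟩
  · exact measure_empty
  have hcover : Γ = ⋃ k : ℕ, Γ ∩ ball a ((k : ℝ) + 1) := by
    rw [← inter_iUnion, iUnion_ball_nat_succ, inter_univ]
  rw [hcover, measure_iUnion_null_iff]
  intro k
  have hfin : μH[d] (Γ ∩ ball a ((k : ℝ) + 1)) ≠ ⊤ :=
    ((h a ha _ (by positivity)).2.trans_lt ENNReal.ofReal_lt_top).ne
  exact (Measure.hausdorffMeasure_zero_or_top hds _).resolve_right hfin

end Weight

theorem statement4_general {n : ℕ} {d : ℝ} (hd : d ≤ (n : ℝ) - 1) {Γ : Set (Euc n)}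
    (hne : Γ.Nonempty) (hcl : IsClosed Γ) (hΓ₀ : μH[(n : ℝ) - 1] Γ = 0)
    {u : Euc n → ℝ} {v : Euc n → Euc n} (hu : LocallyIntegrableOn u Γᶜ volume)
    (hv : AEStronglyMeasurable v (volume.restrict Γᶜ)) (hgrad : IsDistribGradOn u v Γᶜ)
    (hL2 : ∫⁻ x in Γᶜ, ENNReal.ofReal (‖v x‖ ^ 2) ∂(measW n d Γ) < ⊤) :
    LocallyIntegrable u volume ∧ LocallyIntegrable v volume ∧ IsDistribGradOn u v univ ∧
      ∫⁻ x, ENNReal.ofReal (‖v x‖ ^ 2) ∂(measW n d Γ) < ⊤ := by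
  have hvol : volume Γ = 0 :=
    addHaar_eq_zero_of_hausdorffMeasure_eq_zero volume (sub_le_self _ zero_le_one)
      (by rwa [finrank_euclideanSpace_fin])
  have hm : measW n d Γ Γ = 0 := withDensity_absolutelyContinuous _ _ hvol
  rw [restrict_compl_eq_self_of_measure_eq_zero hvol] at hv
  rw [restrict_compl_eq_self_of_measure_eq_zero hm] at hL2
  have hvloc := locallyIntegrable_of_lintegral_sq_measW_lt_top hd hne hcl hvol hv hL2
  obtain ⟨huloc, hgrad_univ⟩ := isDistribGradOn_univ_of_compl hcl hΓ₀ hu hvloc hgrad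
  exact ⟨huloc, hvloc, hgrad_univ, hL2⟩

/-- functions of `W` are locally integrable on `ℝⁿ` and their
distributional gradient on `Ω` extends to a distributional gradient on all of `ℝⁿ`. -/
theorem statement4 (n : ℕ) (hn : 2 ≤ n) (d C₀ : ℝ) (hd0 : 0 < d)
    (hdn : d < (n : ℝ) - 1) (hC₀ : 1 ≤ C₀)
    (Γ : Set (Euc n)) (hne : Γ.Nonempty) (hcl : IsClosed Γ)
    (hAR : AhlforsRegular n d C₀ Γ)
    (u : Euc n → ℝ) (v : Euc n → Euc n)
    (hu : LocallyIntegrableOn u Γᶜ volume)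
    (hv : LocallyIntegrableOn v Γᶜ volume)
    (hgrad : IsDistribGradOn u v Γᶜ)
    (hL2 : ∫⁻ x in Γᶜ, ENNReal.ofReal (‖v x‖ ^ 2) ∂(measW n d Γ) < ⊤) :
    LocallyIntegrable u volume ∧
      ∃ v' : Euc n → Euc n, LocallyIntegrable v' volume ∧
        IsDistribGradOn u v' univ ∧
        (∀ᵐ x ∂(volume.restrict Γᶜ), v' x = v x) ∧
        ∫⁻ x, ENNReal.ofReal (‖v' x‖ ^ 2) ∂(measW n d Γ) < ⊤ := by
  obtain ⟨huloc, hvloc, hgrad_univ, hL2_univ⟩ := statement4_general hdn.le hne hcl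
    (hAR.hausdorffMeasure_eq_zero hdn) hu hv.aestronglyMeasurable hgrad hL2
  exact ⟨huloc, v, hvloc, hgrad_univ, .of_forall fun _ => rfl, hL2_univ⟩
end
end
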